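/- arXiv:1701.00766 — 2 statements merged into one kernel-verified Lean document; each statement's English description precedes it below -/
import Mathlib

section
/- Any two elements of D^k(H) are Poisson equivalent, and δ_P is a metric on D^k(H): for all A, B, C ∈ D^k(H), δ_P(A,B) ≥ 0, δ_P(A,B) = δ_P(B,A), δ_P(A,B) = 0 if and only if A = B, and δ_P(A,C) ≤ δ_P(A,B) + δ_P(B,C). -/
open ContinuousLinearMap

noncomputable section

/-- `ℓ²(ℕ^k; H)`. -/
abbrev L2 (k : ℕ) (H : Type*) [NormedAddCommGroup H] : Type _ :=
  lp (fun _ : Fin k → ℕ => H) 2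

variable {k : ℕ} {H : Type*} [NormedAddCommGroup H] [InnerProductSpace ℂ H] [CompleteSpace H]

/-- The Loewner (operator) order: `S ≤ T` iff `T - S` is a positive operator. -/
def opLE {E : Type*} [NormedAddCommGroup E] [InnerProductSpace ℂ E] [CompleteSpace E]
    (S T : E →L[ℂ] E) : Prop := (T - S).IsPositive

/-- The defect operator `Δ_X(I) = (id - Φ_{X_1}) ∘ ⋯ ∘ (id - Φ_{X_k})(I)`,
where `Φ_{X_i}(Y) = X_i Y X_i*`. -/
def defect (X : Fin k → (H →L[ℂ] H)) : H →L[ℂ] H :=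
  ((List.ofFn fun i => fun Y : H →L[ℂ] H => Y - X i * Y * adjoint (X i)).foldr (· ∘ ·) id) 1

/-- Membership in the regular polydisk `D^k(H)`: pairwise commuting operators of norm `< 1`
with positive invertible defect operator. -/
def memPolydisk (X : Fin k → (H →L[ℂ] H)) : Prop :=
  (∀ i j, Commute (X i) (X j)) ∧ (∀ i, ‖X i‖ < 1) ∧
    (defect X).IsPositive ∧ IsUnit (defect X)

/-- Membership in the closed regular polydisk `D^k(H)⁻`: pairwise commuting contractions `X`
with `rX ∈ D^k(H)` for all `r ∈ (0,1)`. -/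
def memClosedPolydisk (X : Fin k → (H →L[ℂ] H)) : Prop :=
  (∀ i j, Commute (X i) (X j)) ∧ (∀ i, ‖X i‖ ≤ 1) ∧
    ∀ r ∈ Set.Ioo (0 : ℝ) 1, memPolydisk (fun i => ((r : ℂ) • X i))

/-- `P` is the pluriharmonic Poisson kernel `𝒫(R, rX)` on `ℓ²(ℕ^k; H)`: it is characterized by
`⟨𝒫(R,rX)(δ_β h), δ_α ℓ⟩ = r^{Σ|α_i - β_i|} ⟨(∏ X_i^{(β_i-α_i)⁺})(∏ (X_i*)^{(α_i-β_i)⁺}) h, ℓ⟩`. -/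
def IsPoissonKernel (X : Fin k → (H →L[ℂ] H)) (r : ℝ)
    (P : L2 k H →L[ℂ] L2 k H) : Prop :=
  ∀ (α β : Fin k → ℕ) (h ℓ : H),
    inner (𝕜 := ℂ) (P (lp.single 2 β h)) (lp.single 2 α ℓ) =
      ((r ^ (∑ i, ((α i - β i) + (β i - α i))) : ℝ) : ℂ) *
        inner (𝕜 := ℂ)
          (((List.ofFn fun i => X i ^ (β i - α i)).prod *
            (List.ofFn fun i => (adjoint (X i)) ^ (α i - β i)).prod) h) ℓ

/-- The two-sided Harnack-type domination `c⁻² 𝒫(R,rB) ≤ 𝒫(R,rA) ≤ c² 𝒫(R,rB)` for all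
`r ∈ [0,1)`, expressed in terms of the Poisson kernel families. -/
def PoissonSandwich (PA PB : ℝ → (L2 k H →L[ℂ] L2 k H)) (c : ℝ) : Prop :=
  ∀ r ∈ Set.Ico (0 : ℝ) 1,
    opLE (((c : ℂ) ^ 2)⁻¹ • PB r) (PA r) ∧ opLE (PA r) (((c : ℂ) ^ 2) • PB r)

/-- Poisson equivalence of two points, expressed via their Poisson kernel families. -/
def PoissonEquiv (PA PB : ℝ → (L2 k H →L[ℂ] L2 k H)) : Prop :=
  ∃ c : ℝ, 1 ≤ c ∧ PoissonSandwich PA PB c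

/-- The Poisson distance `δ_P`, expressed via the Poisson kernel families. -/
def deltaP (PA PB : ℝ → (L2 k H →L[ℂ] L2 k H)) : ℝ :=
  Real.log (sInf {c : ℝ | 1 ≤ c ∧ PoissonSandwich PA PB c})


theorem aux_comm.{u} {M : Type u} [Monoid M] {k : ℕ} (X : Fin k → M)
    (hX : ∀ i j, Commute (X i) (X j)) :
    ∃ (N : Type u) (_ : CommMonoid N) (x : Fin k → N) (f : N →* M), (∀ i, f (x i) = X i) := by
  have hc : ∀ a b : Submonoid.closure (Set.range X), a * b = b * a :=
    (Submonoid.isMulCommutative_closure M (s := Set.range X) (by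
      rintro _ ⟨i, rfl⟩ _ ⟨j, rfl⟩; exact hX i j)).is_comm.comm
  let inst : CommMonoid (Submonoid.closure (Set.range X)) :=
    { (inferInstance : Monoid (Submonoid.closure (Set.range X))) with mul_comm := hc }
  exact ⟨Submonoid.closure (Set.range X), inst,
    fun i => ⟨X i, Submonoid.subset_closure ⟨i, rfl⟩⟩,
    (Submonoid.closure (Set.range X)).subtype, fun i => rfl⟩

def mon {M : Type*} [Monoid M] {k : ℕ} (X : Fin k → M) (n : Fin k → ℕ) : M :=
  (List.ofFn fun i => X i ^ n i).prod

theorem mon_eq {M N : Type*} [Monoid M] [CommMonoid N] {k : ℕ} (X : Fin k → M) (x : Fin k → N)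
    (f : N →* M) (h : ∀ i, f (x i) = X i) (n : Fin k → ℕ) : mon X n = f (∏ i, x i ^ n i) := by
  rw [← List.prod_ofFn, map_list_prod, List.map_ofFn]
  unfold mon
  congr 2
  ext i
  simp [h]

theorem mon_add_single {M : Type*} [Monoid M] {k : ℕ} (X : Fin k → M)
    (hX : ∀ i j, Commute (X i) (X j)) (n : Fin k → ℕ) (i : Fin k) :
    mon X (n + Pi.single i 1) = mon X n * X i ∧ mon X (n + Pi.single i 1) = X i * mon X n := by
  obtain ⟨N, _, x, f, h⟩ := aux_comm X hX
  have key : (∏ j, x j ^ (n + Pi.single i 1 : Fin k → ℕ) j) = (∏ j, x j ^ n j) * x i := by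
    simp only [Pi.add_apply, pow_add, Finset.prod_mul_distrib]
    congr 1
    rw [Finset.prod_eq_single i]
    · simp
    · intro j _ hj
      simp [Pi.single_apply, hj]
    · simp
  rw [mon_eq X x f h, mon_eq X x f h, key]
  constructor
  · rw [map_mul, h]
  · rw [mul_comm, map_mul, h]

theorem mon_zero {M : Type*} [Monoid M] {k : ℕ} (X : Fin k → M) : mon X 0 = 1 := by
  simp [mon]

def Fop (X : Fin k → (H →L[ℂ] H)) : List (Fin k) → (H →L[ℂ] H) → (H →L[ℂ] H)
  | [], Y => Y
  | i :: L, Y => Fop X L Y - X i * Fop X L Y * adjoint (X i)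

theorem defect_eq (X : Fin k → (H →L[ℂ] H)) : defect X = Fop X (List.finRange k) 1 := by
  unfold defect
  rw [List.ofFn_eq_map]
  induction List.finRange k with
  | nil => rfl
  | cons i L ih =>
    simp only [List.map_cons, List.foldr_cons, Function.comp_apply, Fop]
    rw [ih]

def Ker (X : Fin k → (H →L[ℂ] H)) (L : List (Fin k)) (Y : H →L[ℂ] H) (α β : Fin k → ℕ) :
    H →L[ℂ] H :=
  open Classical in
  if ∀ i ∈ L, α i = β i then mon X (β - α) * Y * mon (fun i => adjoint (X i)) (α - β) else 0

def HasKer (T : L2 k H →L[ℂ] L2 k H) (K : (Fin k → ℕ) → (Fin k → ℕ) → (H →L[ℂ] H)) : Prop :=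
  ∀ (α β : Fin k → ℕ) (h ℓ : H),
    inner ℂ (T (lp.single 2 β h)) (lp.single 2 α ℓ) = inner ℂ (K α β h) ℓ

theorem Ker_step (X : Fin k → (H →L[ℂ] H)) (hX : ∀ i j, Commute (X i) (X j))
    (L : List (Fin k)) (Y : H →L[ℂ] H) (i : Fin k) (hi : i ∉ L) (α β : Fin k → ℕ) :
    Ker X (i :: L) (Y - X i * Y * adjoint (X i)) α β =
      Ker X L Y α β - Ker X L Y α (β + Pi.single i 1) * adjoint (X i)
       - X i * Ker X L Y (α + Pi.single i 1) β
       + X i * Ker X L Y (α + Pi.single i 1) (β + Pi.single i 1) * adjoint (X i) := by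
  have hX' : ∀ i j, Commute (adjoint (X i)) (adjoint (X j)) := fun i j => (hX i j).star_star
  have hne : ∀ j ∈ L, (Pi.single i 1 : Fin k → ℕ) j = 0 := by
    intro j hj
    rw [Pi.single_apply, if_neg]
    rintro rfl
    exact hi hj
  have c1 : (∀ j ∈ L, α j = (β + Pi.single i 1 : Fin k → ℕ) j) ↔ (∀ j ∈ L, α j = β j) := by
    refine forall₂_congr fun j hj => ?_
    simp [hne j hj]
  have c2 : (∀ j ∈ L, (α + Pi.single i 1 : Fin k → ℕ) j = β j) ↔ (∀ j ∈ L, α j = β j) := by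
    refine forall₂_congr fun j hj => ?_
    simp [hne j hj]
  have c3 : (∀ j ∈ L, (α + Pi.single i 1 : Fin k → ℕ) j = (β + Pi.single i 1 : Fin k → ℕ) j) ↔ (∀ j ∈ L, α j = β j) := by
    refine forall₂_congr fun j hj => ?_
    simp
  by_cases hL : ∀ j ∈ L, α j = β j
  swap
  · have : ¬ ∀ j ∈ i :: L, α j = β j := fun h => hL fun j hj => h j (by simp [hj])
    simp only [Ker, c1, c2, c3, if_neg hL, if_neg this]
    simp
  simp only [Ker, c1, c2, c3, if_pos hL]
  have e3 : (β + Pi.single i 1) - (α + Pi.single i 1) = β - α := by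
    ext j; simp only [Pi.sub_apply, Pi.add_apply]; omega
  have e4 : (α + Pi.single i 1) - (β + Pi.single i 1) = α - β := by
    ext j; simp only [Pi.sub_apply, Pi.add_apply]; omega
  rw [e3, e4]
  have hP := fun n => mon_add_single X hX n i
  have hQ := fun n => mon_add_single (fun j => adjoint (X j)) hX' n i
  rcases lt_trichotomy (α i) (β i) with h | h | h
  · have : ¬ ∀ j ∈ i :: L, α j = β j := fun hh => h.ne (hh i (by simp))
    rw [if_neg this]
    have f1 : (β - α) = (β - (α + Pi.single i 1)) + Pi.single i 1 := by
      ext j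
      by_cases hj : j = i
      · subst hj; simp; omega
      · simp [hj]
    have f2 : (β + Pi.single i 1 - α) = (β - α) + Pi.single i 1 := by
      ext j
      by_cases hj : j = i
      · subst hj; simp; omega
      · simp [hj]
    have f3 : α - (β + Pi.single i 1) = α - β := by
      ext j
      by_cases hj : j = i
      · subst hj; simp; omega
      · simp [hj]
    have f4 : (α + Pi.single i 1) - β = α - β := by
      ext j
      by_cases hj : j = i
      · subst hj; simp; omega
      · simp [hj]
    rw [f2, f3, f4, (hP (β - α)).2, f1, (hP _).2]
    simp only [mul_assoc]
    abel
  · have : ∀ j ∈ i :: L, α j = β j := by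
      intro j hj
      rcases List.mem_cons.1 hj with rfl | hj
      · exact h
      · exact hL j hj
    rw [if_pos this]
    have f2 : (β + Pi.single i 1 - α) = (β - α) + Pi.single i 1 := by
      ext j
      by_cases hj : j = i
      · subst hj; simp; omega
      · simp [hj]
    have f5 : (α + Pi.single i 1 - β) = (α - β) + Pi.single i 1 := by
      ext j
      by_cases hj : j = i
      · subst hj; simp; omega
      · simp [hj]
    have f3 : α - (β + Pi.single i 1) = α - β := by
      ext j
      by_cases hj : j = i
      · subst hj; simp; omega
      · simp [hj]
    have f4 : β - (α + Pi.single i 1) = β - α := by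
      ext j
      by_cases hj : j = i
      · subst hj; simp; omega
      · simp [hj]
    rw [f2, f3, f4, f5, (hP (β - α)).2, (hQ (α - β)).1]
    have a1 := (hP (β - α)).1.symm.trans (hP (β - α)).2
    have a2 := (hQ (α - β)).1.symm.trans (hQ (α - β)).2
    have a3 : mon X (β - α) * (X i * Y * adjoint (X i)) * mon (fun i => adjoint (X i)) (α - β)
        = (mon X (β - α) * X i) * Y * (adjoint (X i) * mon (fun i => adjoint (X i)) (α - β)) := by
      simp only [mul_assoc]
    rw [mul_sub, sub_mul, a3, a1, ← a2]
    simp only [mul_assoc]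
    abel
  · have : ¬ ∀ j ∈ i :: L, α j = β j := fun hh => h.ne' (hh i (by simp))
    rw [if_neg this]
    have f1 : (α - β) = (α - (β + Pi.single i 1)) + Pi.single i 1 := by
      ext j
      by_cases hj : j = i
      · subst hj; simp; omega
      · simp [hj]
    have f2 : (α + Pi.single i 1 - β) = (α - β) + Pi.single i 1 := by
      ext j
      by_cases hj : j = i
      · subst hj; simp; omega
      · simp [hj]
    have f3 : β - (α + Pi.single i 1) = β - α := by
      ext j
      by_cases hj : j = i
      · subst hj; simp; omega
      · simp [hj]
    have f4 : (β + Pi.single i 1) - α = β - α := by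
      ext j
      by_cases hj : j = i
      · subst hj; simp; omega
      · simp [hj]
    rw [f2, f3, f4, (hQ (α - β)).1, f1, (hQ _).1]
    simp only [mul_assoc]
    abel

theorem shift_orth (i : Fin k) : OrthogonalFamily ℂ (fun _ : Fin k → ℕ => H)
    (fun α : Fin k → ℕ => ({ toLinearMap := (lp.singleContinuousLinearMap ℂ
      (fun _ : Fin k → ℕ => H) 2 (α + Pi.single i 1)).toLinearMap
                             norm_map' := fun x => by
                              exact lp.norm_single (by norm_num) _ _ } : H →ₗᵢ[ℂ] L2 k H)) := by
  intro α β hab x y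
  change inner ℂ (lp.single 2 (α + Pi.single i 1) x : L2 k H)
    (lp.single 2 (β + Pi.single i 1) y : L2 k H) = 0
  rw [lp.inner_single_left, lp.single_apply_ne, inner_zero_right]
  simpa using hab

def Vop (X : Fin k → (H →L[ℂ] H)) (i : Fin k) : L2 k H →L[ℂ] L2 k H :=
  1 - (shift_orth (H := H) i).linearIsometry.toContinuousLinearMap *
    lp.mapCLM 2 (fun _ : Fin k → ℕ => adjoint (X i)) (norm_nonneg (X i)) (fun _ => by simp)

theorem Vop_single (X : Fin k → (H →L[ℂ] H)) (i : Fin k) (β : Fin k → ℕ) (h : H) :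
    Vop X i (lp.single 2 β h) =
      lp.single 2 β h - lp.single 2 (β + Pi.single i 1) (adjoint (X i) h) := by
  have : lp.mapCLM 2 (fun _ : Fin k → ℕ => adjoint (X i)) (norm_nonneg (X i)) (fun _ => by simp)
     (lp.single 2 β h) = lp.single 2 β (adjoint (X i) h) := by
    ext γ
    rw [lp.mapCLM_apply_coe]
    by_cases hg : γ = β
    · subst hg; simp
    · rw [lp.single_apply_ne _ _ _ hg, lp.single_apply_ne _ _ _ hg, map_zero]
  unfold Vop
  rw [sub_apply, mul_apply_eq_comp, this]
  congr 1
  exact OrthogonalFamily.linearIsometry_apply_single (shift_orth (H := H) i) _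

theorem norm_shift (X : Fin k → (H →L[ℂ] H)) (i : Fin k) :
    ‖(shift_orth (H := H) i).linearIsometry.toContinuousLinearMap *
    lp.mapCLM 2 (fun _ : Fin k → ℕ => adjoint (X i)) (norm_nonneg (X i)) (fun _ => by simp)‖
      ≤ ‖X i‖ := by
  refine (norm_mul_le _ _).trans ?_
  refine (mul_le_mul (LinearIsometry.norm_toContinuousLinearMap_le _) (lp.norm_mapCLM_le _ _ _ _)
    (norm_nonneg _) zero_le_one).trans ?_
  simp

theorem Vop_bounds (X : Fin k → (H →L[ℂ] H)) (i : Fin k) (ρ : ℝ) (hρ : ρ < 1) (hX : ‖X i‖ ≤ ρ) :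
    Function.Surjective (Vop X i) ∧ ∀ g, ‖Vop X i g‖ ≤ 2 * ‖g‖ ∧ (1 - ρ) * ‖g‖ ≤ ‖Vop X i g‖ := by
  have hn := (norm_shift X i).trans hX
  unfold Vop
  set S := (shift_orth (H := H) i).linearIsometry.toContinuousLinearMap *
    lp.mapCLM 2 (fun _ : Fin k → ℕ => adjoint (X i)) (norm_nonneg (X i)) (fun _ => by simp)
  have hS : ∀ g, ‖S g‖ ≤ ρ * ‖g‖ := fun g => S.le_of_opNorm_le hn g
  constructor
  · obtain ⟨u, hu⟩ := isUnit_one_sub_of_norm_lt_one (hn.trans_lt hρ)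
    intro y
    refine ⟨(↑u⁻¹ : L2 k H →L[ℂ] L2 k H) y, ?_⟩
    rw [← hu, ← mul_apply_eq_comp, Units.mul_inv]
    rfl
  · intro g
    have e : (1 - S) g = g - S g := rfl
    rw [e]
    have h1 := norm_sub_le g (S g)
    have h2 := norm_sub_norm_le g (S g)
    have h3 := hS g
    constructor
    · nlinarith [norm_nonneg g]
    · linarith

theorem HasKer_step (X : Fin k → (H →L[ℂ] H)) (hX : ∀ i j, Commute (X i) (X j))
    (L : List (Fin k)) (Y : H →L[ℂ] H) (i : Fin k) (hi : i ∉ L) (T : L2 k H →L[ℂ] L2 k H)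
    (hT : HasKer T (Ker X L Y)) :
    HasKer (adjoint (Vop X i) * T * Vop X i) (Ker X (i :: L) (Y - X i * Y * adjoint (X i))) := by
  intro α β h l
  rw [mul_apply_eq_comp, mul_apply_eq_comp,
    ContinuousLinearMap.adjoint_inner_left, Vop_single, Vop_single, map_sub, inner_sub_left,
    inner_sub_right, inner_sub_right, hT, hT, hT, hT, Ker_step X hX L Y i hi]
  simp only [add_apply, sub_apply,
    mul_apply_eq_comp, inner_add_left, inner_sub_left,
    ContinuousLinearMap.adjoint_inner_right]
  ring

theorem factor (X : Fin k → (H →L[ℂ] H)) (hX : ∀ i j, Commute (X i) (X j)) (ρ : ℝ) (hρ : ρ < 1)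
    (hXρ : ∀ i, ‖X i‖ ≤ ρ) (T : L2 k H →L[ℂ] L2 k H) (hT : HasKer T (Ker X [] 1))
    (L : List (Fin k)) (hL : L.Nodup) :
    ∃ V : L2 k H →L[ℂ] L2 k H, HasKer (adjoint V * T * V) (Ker X L (Fop X L 1)) ∧
      Function.Surjective V ∧
      ∀ g, ‖V g‖ ≤ 2 ^ L.length * ‖g‖ ∧ (1 - ρ) ^ L.length * ‖g‖ ≤ ‖V g‖ := by
  induction L with
  | nil =>
    refine ⟨1, ?_, Function.surjective_id, by simp⟩
    rw [show adjoint (1 : L2 k H →L[ℂ] L2 k H) = 1 from star_one _, one_mul, mul_one]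
    exact hT
  | cons i L ih =>
    obtain ⟨hi, hL⟩ := List.nodup_cons.1 hL
    obtain ⟨V, h1, h2, h3⟩ := ih hL
    obtain ⟨b1, b2⟩ := Vop_bounds X i ρ hρ (hXρ i)
    refine ⟨V * Vop X i, ?_, h2.comp b1, ?_⟩
    · have := HasKer_step X hX L _ i hi _ h1
      have e : adjoint (V * Vop X i) = adjoint (Vop X i) * adjoint V := star_mul _ _
      rw [e]
      simpa only [mul_assoc, Fop] using this
    · intro g
      have := h3 (Vop X i g)
      have := b2 g
      rw [mul_apply_eq_comp, List.length_cons, pow_succ, pow_succ, mul_assoc, mul_assoc]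
      constructor
      · refine (h3 _).1.trans ?_
        gcongr
        exact (b2 g).1
      · refine le_trans ?_ (h3 _).2
        have : 0 ≤ (1 - ρ) ^ L.length := pow_nonneg (by linarith) _
        gcongr
        exact (b2 g).2

theorem pos_of_sub_conj (x Y : H →L[ℂ] H) (hx : ‖x‖ < 1) (h : 0 ≤ Y - x * Y * adjoint x) :
    0 ≤ Y := by
  have h1 : ∀ n : ℕ, 0 ≤ Y - x ^ n * Y * star (x ^ n) := by
    intro n
    induction n with
    | zero => simp
    | succ n ih =>
      have e : Y - x ^ (n + 1) * Y * star (x ^ (n + 1)) =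
          (Y - x * Y * adjoint x) + x * (Y - x ^ n * Y * star (x ^ n)) * star x := by
        rw [pow_succ', star_mul, ← ContinuousLinearMap.star_eq_adjoint]
        simp only [mul_sub, sub_mul, mul_assoc]
        abel
      rw [e]
      exact add_nonneg h (star_right_conjugate_nonneg ih x)
  have hp : Filter.Tendsto (fun n : ℕ => x ^ n) Filter.atTop (nhds 0) :=
    tendsto_pow_atTop_nhds_zero_of_norm_lt_one hx
  have h2 : Filter.Tendsto (fun n : ℕ => Y - x ^ n * Y * star (x ^ n)) Filter.atTop
      (nhds (Y - 0 * Y * star 0)) :=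
    tendsto_const_nhds.sub ((hp.mul_const Y).mul ((continuous_star.tendsto 0).comp hp))
  have h3 := CStarAlgebra.isClosed_nonneg.mem_of_tendsto h2 (Filter.Eventually.of_forall h1)
  simpa using h3

theorem Fop_sub_conj (X : Fin k → (H →L[ℂ] H)) (L : List (Fin k)) (x Y : H →L[ℂ] H)
    (hx : ∀ i, Commute (X i) x) :
    Fop X L (Y - x * Y * adjoint x) = Fop X L Y - x * Fop X L Y * adjoint x := by
  induction L with
  | nil => rfl
  | cons i L ih =>
    simp only [Fop, ih]
    have e1 : X i * (x * Fop X L Y * adjoint x) * adjoint (X i)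
        = x * (X i * Fop X L Y * adjoint (X i)) * adjoint x := by
      have a1 : X i * x = x * X i := hx i
      have a2 : adjoint x * adjoint (X i) = adjoint (X i) * adjoint x := ((hx i).star_star).symm
      calc _ = (X i * x) * Fop X L Y * (adjoint x * adjoint (X i)) := by simp only [mul_assoc]
        _ = _ := by rw [a1, a2]; simp only [mul_assoc]
    simp only [mul_sub, sub_mul, e1]
    abel

theorem adj_smul_real (r : ℝ) (T : H →L[ℂ] H) :
    adjoint ((r : ℂ) • T) = (r : ℂ) • adjoint T := by
  rw [← ContinuousLinearMap.star_eq_adjoint, star_smul, ContinuousLinearMap.star_eq_adjoint]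
  simp [Complex.star_def]

theorem Fop_mono (X : Fin k → (H →L[ℂ] H)) (hX : ∀ i j, Commute (X i) (X j))
    (hX1 : ∀ i, ‖X i‖ < 1) (r : ℝ) (hr0 : 0 ≤ r) (hr1 : r ≤ 1) (Z : H →L[ℂ] H) (hZ : 0 ≤ Z)
    (L : List (Fin k)) : ∀ Y, Z ≤ Fop X L Y → Z ≤ Fop (fun i => (r : ℂ) • X i) L Y := by
  induction L with
  | nil => intro Y h; exact h
  | cons i L ih =>
    intro Y h
    have h1 : Z ≤ Fop X L Y := by
      have hp := pos_of_sub_conj (X i) (Fop X L Y) (hX1 i) (hZ.trans h)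
      refine h.trans ?_
      exact sub_le_self _ (star_right_conjugate_nonneg hp (X i))
    have h2 : Z ≤ Fop X L (Y - X i * Y * adjoint (X i)) := by
      rw [Fop_sub_conj X L _ _ (fun j => hX j i)]
      exact h
    have h3 := ih _ h1
    have h4 := ih _ h2
    rw [Fop_sub_conj _ L _ _ (fun j => (hX j i).smul_left _)] at h4
    set G := Fop (fun i => (r : ℂ) • X i) L Y
    have e : Fop (fun i => (r : ℂ) • X i) (i :: L) Y =
      (1 - r ^ 2) • G + (r ^ 2) • (G - X i * G * adjoint (X i)) := by
      change G - ((r : ℂ) • X i) * G * adjoint ((r : ℂ) • X i) = _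
      have : adjoint ((r : ℂ) • X i) = (r : ℂ) • adjoint (X i) := adj_smul_real _ _
      rw [this]
      simp only [smul_mul_assoc, mul_smul_comm, Complex.coe_smul, smul_sub, smul_smul, sub_smul,
        one_smul]
      rw [pow_two]
      abel
    rw [e]
    have hr2 : r ^ 2 ≤ 1 := by nlinarith
    calc Z = (1 - r ^ 2) • Z + (r ^ 2) • Z := by rw [← add_smul]; simp
      _ ≤ _ := by
        refine add_le_add ?_ ?_
        · exact smul_le_smul_of_nonneg_left h3 (by linarith)
        · exact smul_le_smul_of_nonneg_left h4 (by positivity)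

theorem Fop_norm (X : Fin k → (H →L[ℂ] H)) (hX1 : ∀ i, ‖X i‖ ≤ 1) (L : List (Fin k)) :
    ‖Fop X L 1‖ ≤ 2 ^ L.length := by
  induction L with
  | nil => exact (ContinuousLinearMap.norm_id_le).trans (by simp)
  | cons i L ih =>
    have h1 : ‖X i * Fop X L 1 * adjoint (X i)‖ ≤ 1 * ‖Fop X L 1‖ * 1 := by
      refine (norm_mul_le _ _).trans ?_
      gcongr
      · refine (norm_mul_le _ _).trans ?_
        gcongr
        exact hX1 i
      · simpa using hX1 i
    have h2 := norm_sub_le (Fop X L 1) (X i * Fop X L 1 * adjoint (X i))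
    simp only [Fop, List.length_cons, pow_succ]
    linarith

theorem mon_smul (X : Fin k → (H →L[ℂ] H)) (c : ℂ) (n : Fin k → ℕ) :
    mon (fun i => c • X i) n = c ^ (∑ i, n i) • mon X n := by
  unfold mon
  rw [List.ofFn_eq_map, List.ofFn_eq_map, Fin.sum_univ_def]
  induction List.finRange k with
  | nil => simp
  | cons i L ih =>
    rw [List.map_cons, List.prod_cons, ih]
    simp only [List.map_cons, List.prod_cons, List.sum_cons, smul_pow, pow_add,
      smul_mul_assoc, mul_smul_comm, smul_smul]
    rw [mul_comm]

theorem hasKer_of_poisson (X : Fin k → (H →L[ℂ] H)) (r : ℝ) (P : L2 k H →L[ℂ] L2 k H)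
    (h : IsPoissonKernel X r P) : HasKer P (Ker (fun i => (r : ℂ) • X i) [] 1) := by
  intro α β x l
  rw [h α β x l]
  have : (fun i => adjoint ((r : ℂ) • X i)) = fun i => (r : ℂ) • adjoint (X i) := by
    ext1 i; exact adj_smul_real _ _
  simp only [Ker, List.not_mem_nil, false_imp_iff, implies_true, if_true, this, mon_smul, mul_one]
  rw [smul_mul_smul_comm, ← pow_add, ← Finset.sum_add_distrib]
  rw [show ∀ (c : ℂ) (T : H →L[ℂ] H), (c • T) x = c • T x from fun _ _ => rfl, inner_smul_left]
  simp only [map_pow, Complex.conj_ofReal, Complex.ofReal_pow, Pi.sub_apply]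
  congr 2
  exact Finset.sum_congr rfl fun i _ => by omega

theorem diag_form (T : L2 k H →L[ℂ] L2 k H) (D : H →L[ℂ] H)
    (hT : HasKer T (fun α β => open Classical in if α = β then D else 0)) (x y : L2 k H) :
    HasSum (fun α => inner ℂ (D (x α)) (y α)) (inner ℂ (T x) y) := by
  have key : ∀ (x : L2 k H) α, T x α = D (x α) := by
    have hs : ∀ β h α, T (lp.single 2 β h) α = D ((lp.single 2 β h : L2 k H) α) := by
      intro β h α
      refine ext_inner_right ℂ fun l => ?_
      rw [← lp.inner_single_right, hT]
      by_cases hab : α = β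
      · subst hab; simp
      · rw [lp.single_apply_ne _ _ _ hab]; simp [hab]
    intro x α
    let T1 : L2 k H →L[ℂ] L2 k H :=
      lp.mapCLM 2 (fun _ : Fin k → ℕ => D) (norm_nonneg D) (fun _ => le_rfl)
    have : T = T1 := by
      refine lp.ext_continuousLinearMap (by norm_num) fun β => ?_
      ext h γ
      exact hs β h γ
    rw [this]; rfl
  simpa only [key] using lp.hasSum_inner (𝕜 := ℂ) (T x) y

theorem diag_bounds (T : L2 k H →L[ℂ] L2 k H) (D : H →L[ℂ] H) (d : ℝ)
    (hT : HasKer T (fun α β => open Classical in if α = β then D else 0))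
    (hD : D.IsPositive) (hd : ∀ x, d * ‖x‖ ^ 2 ≤ (inner ℂ (D x) x).re) (x : L2 k H) :
    (inner ℂ (T x) x).im = 0 ∧ d * ‖x‖ ^ 2 ≤ (inner ℂ (T x) x).re ∧
      (inner ℂ (T x) x).re ≤ ‖D‖ * ‖x‖ ^ 2 := by
  have h := diag_form T D hT x x
  have hn : HasSum (fun α => ‖x α‖ ^ 2) (‖x‖ ^ 2) := by
    have := lp.hasSum_norm (p := 2) (by norm_num) x
    simpa using this
  have hre := Complex.hasSum_re h
  have him := Complex.hasSum_im h
  refine ⟨?_, ?_, ?_⟩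
  · refine him.unique ?_
    have : ∀ α, (inner ℂ (D (x α)) (x α)).im = 0 := fun α => by
      have := (Complex.le_def.1 (hD.inner_nonneg_left (x α))).2
      simpa using this.symm
    simp only [this]
    exact hasSum_zero
  · exact hasSum_le (fun α => hd (x α)) (hn.mul_left d) hre
  · refine hasSum_le (fun α => ?_) hre (hn.mul_left ‖D‖)
    calc _ ≤ ‖inner ℂ (D (x α)) (x α)‖ := Complex.re_le_norm _
      _ ≤ ‖D (x α)‖ * ‖x α‖ := norm_inner_le_norm _ _
      _ ≤ (‖D‖ * ‖x α‖) * ‖x α‖ := by gcongr; exact D.le_opNorm _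
      _ = _ := by ring

def qf (T : L2 k H →L[ℂ] L2 k H) (x : L2 k H) : ℝ := (inner ℂ (T x) x).re

theorem uniform_bounds (A : Fin k → (H →L[ℂ] H)) (hA : memPolydisk A) :
    ∃ m M : ℝ, 0 < m ∧ 0 < M ∧ ∀ r ∈ Set.Ico (0 : ℝ) 1, ∀ P, IsPoissonKernel A r P →
      ∀ x, (inner ℂ (P x) x).im = 0 ∧ m * ‖x‖ ^ 2 ≤ qf P x ∧ qf P x ≤ M * ‖x‖ ^ 2 := by
  obtain ⟨hc, hn, hp, hu⟩ := hA
  obtain ⟨ρ, hρ0, hρ1, hρ⟩ : ∃ ρ : ℝ, 0 ≤ ρ ∧ ρ < 1 ∧ ∀ i, ‖A i‖ ≤ ρ := by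
    have hf : ∀ i, ‖A i‖₊ < 1 := fun i => hn i
    refine ⟨((Finset.univ.sup fun i => ‖A i‖₊ : NNReal) : ℝ), NNReal.coe_nonneg _, ?_, fun i => ?_⟩
    · have : (Finset.univ.sup fun i => ‖A i‖₊) < (1 : NNReal) :=
        (Finset.sup_lt_iff (by simp)).2 fun i _ => hf i
      exact_mod_cast this
    · have : ‖A i‖₊ ≤ Finset.univ.sup fun i => ‖A i‖₊ :=
        Finset.le_sup (f := fun i => ‖A i‖₊) (Finset.mem_univ i)
      exact_mod_cast this
  obtain ⟨d, hd0, hd⟩ : ∃ d : ℝ, 0 < d ∧ algebraMap ℝ (H →L[ℂ] H) d ≤ defect A := by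
    have hs : IsStrictlyPositive (defect A) :=
      hu.isStrictlyPositive ((ContinuousLinearMap.nonneg_iff_isPositive _).2 hp)
    rcases subsingleton_or_nontrivial (H →L[ℂ] H) with hss | hnt
    · exact ⟨1, one_pos, (Subsingleton.elim _ _).le⟩
    exact (CFC.exists_pos_algebraMap_le_iff hs.isSelfAdjoint).2 fun x hx ↦ hs.spectrum_pos hx
  have hd' : (0 : H →L[ℂ] H) ≤ algebraMap ℝ (H →L[ℂ] H) d := by
    rw [Algebra.algebraMap_eq_smul_one]
    exact smul_nonneg hd0.le zero_le_one
  rw [defect_eq] at hd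
  refine ⟨d / (2 ^ k) ^ 2, 2 ^ k / ((1 - ρ) ^ k) ^ 2, by positivity, ?_, ?_⟩
  · have : 0 < 1 - ρ := by linarith
    positivity
  intro r hr P hP x
  have hXc : ∀ i j, Commute ((r : ℂ) • A i) ((r : ℂ) • A j) := fun i j =>
    ((hc i j).smul_left _).smul_right _
  have hXρ : ∀ i, ‖(r : ℂ) • A i‖ ≤ ρ := fun i => by
    rw [norm_smul, Complex.norm_real, Real.norm_of_nonneg hr.1]
    nlinarith [hρ i, norm_nonneg (A i), hr.2]
  obtain ⟨V, hV, hsurj, hVb⟩ := factor (fun i => (r : ℂ) • A i) hXc ρ hρ1 hXρ P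
    (hasKer_of_poisson A r P hP) (List.finRange k) (List.nodup_finRange k)
  have hDlow := Fop_mono A hc hn r hr.1 hr.2.le _ hd' (List.finRange k) 1 hd
  have hDnorm := Fop_norm (fun i => (r : ℂ) • A i) (fun i => (hXρ i).trans hρ1.le) (List.finRange k)
  set D := Fop (fun i => (r : ℂ) • A i) (List.finRange k) 1
  rw [List.length_finRange] at hDnorm
  simp only [List.length_finRange] at hVb
  have hDpos : D.IsPositive := (ContinuousLinearMap.nonneg_iff_isPositive _).1 (hd'.trans hDlow)
  have hDd : ∀ y, d * ‖y‖ ^ 2 ≤ (inner ℂ (D y) y).re := by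
    intro y
    have h1 := ((ContinuousLinearMap.le_def _ _).1 hDlow).re_inner_nonneg_left y
    have e : (D - algebraMap ℝ (H →L[ℂ] H) d) y = D y - (d : ℂ) • y := by
      rw [Algebra.algebraMap_eq_smul_one]; simp
    rw [e, inner_sub_left, inner_smul_left, inner_self_eq_norm_sq_to_K] at h1
    simp only [map_sub, Complex.conj_ofReal] at h1
    have e2 : ((d : ℂ) * ((‖y‖ : ℝ) : ℂ) ^ 2).re = d * ‖y‖ ^ 2 := by norm_cast
    have h2 : 0 ≤ (inner ℂ (D y) y).re - ((d : ℂ) * ((‖y‖ : ℝ) : ℂ) ^ 2).re := h1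
    rw [e2] at h2
    linarith
  have hK : HasKer (adjoint V * P * V) (fun α β => open Classical in if α = β then D else 0) := by
    convert hV using 1
    ext1 α
    ext1 β
    unfold Ker
    have : (∀ i ∈ List.finRange k, α i = β i) ↔ α = β := by simp [funext_iff]
    simp only [this]
    split_ifs with h
    · subst h
      have : α - α = 0 := by ext; simp
      rw [this, mon_zero, mon_zero, one_mul, mul_one]
    · rfl
  obtain ⟨g, rfl⟩ := hsurj x
  obtain ⟨b1, b2, b3⟩ := diag_bounds _ D d hK hDpos hDd g
  have e : inner ℂ ((adjoint V * P * V) g) g = inner ℂ (P (V g)) (V g) := by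
    rw [mul_apply_eq_comp, mul_apply_eq_comp, ContinuousLinearMap.adjoint_inner_left]
  rw [e] at b1 b2 b3
  obtain ⟨v1, v2⟩ := hVb g
  have hρ' : 0 < 1 - ρ := by linarith
  refine ⟨b1, le_trans ?_ b2, b3.trans ?_⟩
  · rw [div_mul_eq_mul_div, div_le_iff₀ (by positivity), mul_assoc]
    gcongr
    rw [← mul_pow, mul_comm ‖g‖]
    gcongr
  · rw [div_mul_eq_mul_div, le_div_iff₀ (by positivity), mul_assoc]
    gcongr
    rw [← mul_pow, mul_comm ‖g‖]
    gcongr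

theorem opLE_iff (S T : L2 k H →L[ℂ] L2 k H) (hS : ∀ x, (inner ℂ (S x) x).im = 0)
    (hT : ∀ x, (inner ℂ (T x) x).im = 0) : opLE S T ↔ ∀ x, qf S x ≤ qf T x := by
  unfold opLE
  rw [ContinuousLinearMap.isPositive_iff_complex]
  refine forall_congr' fun x => ?_
  have e : inner ℂ ((T - S) x) x = inner ℂ (T x) x - inner ℂ (S x) x := by
    rw [sub_apply, inner_sub_left]
  rw [e]
  have : ((inner ℂ (T x) x - inner ℂ (S x) x).re : ℂ) = inner ℂ (T x) x - inner ℂ (S x) x := by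
    apply Complex.ext
    · simp
    · simp [hS x, hT x]
  constructor
  · rintro ⟨-, h⟩
    have h' : 0 ≤ (inner ℂ (T x) x - inner ℂ (S x) x).re := h
    rw [Complex.sub_re] at h'
    unfold qf
    linarith
  · intro h
    refine ⟨this, ?_⟩
    change 0 ≤ (inner ℂ (T x) x - inner ℂ (S x) x).re
    rw [Complex.sub_re]
    unfold qf at h
    linarith

theorem smul_form (T : L2 k H →L[ℂ] L2 k H) (c : ℝ) (x : L2 k H) :
    inner ℂ (((c : ℂ) • T) x) x = (c : ℂ) * inner ℂ (T x) x := by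
  rw [show ((c : ℂ) • T) x = (c : ℂ) • T x from rfl, inner_smul_left, Complex.conj_ofReal]

theorem sandwich_iff (PA PB : ℝ → (L2 k H →L[ℂ] L2 k H)) (c : ℝ) (hc : 1 ≤ c)
    (hA : ∀ r ∈ Set.Ico (0 : ℝ) 1, ∀ x, (inner ℂ (PA r x) x).im = 0)
    (hB : ∀ r ∈ Set.Ico (0 : ℝ) 1, ∀ x, (inner ℂ (PB r x) x).im = 0) :
    PoissonSandwich PA PB c ↔ ∀ r ∈ Set.Ico (0 : ℝ) 1, ∀ x,
      qf (PB r) x ≤ c ^ 2 * qf (PA r) x ∧ qf (PA r) x ≤ c ^ 2 * qf (PB r) x := by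
  unfold PoissonSandwich
  refine forall₂_congr fun r hr => ?_
  have e1 : ((c : ℂ) ^ 2)⁻¹ = (((c ^ 2)⁻¹ : ℝ) : ℂ) := by push_cast; rfl
  have e2 : ((c : ℂ) ^ 2) = ((c ^ 2 : ℝ) : ℂ) := by push_cast; rfl
  have hc2 : 0 < c ^ 2 := by positivity
  rw [e1, e2, opLE_iff _ _ _ (hA r hr), opLE_iff _ _ (hA r hr), ← forall_and]
  · refine forall_congr' fun x => ?_
    simp only [qf, smul_form, Complex.re_ofReal_mul]
    rw [inv_mul_le_iff₀ hc2]
  · intro x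
    rw [smul_form, Complex.im_ofReal_mul, hB r hr, mul_zero]
  · intro x
    rw [smul_form, Complex.im_ofReal_mul, hB r hr, mul_zero]

theorem sInf_ge_one {PA PB : ℝ → (L2 k H →L[ℂ] L2 k H)} (h : PoissonEquiv PA PB) :
    1 ≤ sInf {c : ℝ | 1 ≤ c ∧ PoissonSandwich PA PB c} :=
  le_csInf h (fun _ hc => hc.1)

theorem equiv_of_bounds (PA PB : ℝ → (L2 k H →L[ℂ] L2 k H)) (m M m' M' : ℝ)
    (hm : 0 < m) (hM : 0 < M) (hm' : 0 < m') (hM' : 0 < M')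
    (hA : ∀ r ∈ Set.Ico (0 : ℝ) 1, ∀ x, (inner ℂ (PA r x) x).im = 0 ∧
      m * ‖x‖ ^ 2 ≤ qf (PA r) x ∧ qf (PA r) x ≤ M * ‖x‖ ^ 2)
    (hB : ∀ r ∈ Set.Ico (0 : ℝ) 1, ∀ x, (inner ℂ (PB r x) x).im = 0 ∧
      m' * ‖x‖ ^ 2 ≤ qf (PB r) x ∧ qf (PB r) x ≤ M' * ‖x‖ ^ 2) : PoissonEquiv PA PB := by
  have hc : 1 ≤ 1 + M / m' + M' / m := by
    have : 0 < M / m' := by positivity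
    have : 0 < M' / m := by positivity
    linarith
  set c := 1 + M / m' + M' / m with hcdef
  refine ⟨c, hc, (sandwich_iff PA PB c hc (fun r hr x => (hA r hr x).1)
    (fun r hr x => (hB r hr x).1)).2 ?_⟩
  have hcc : c ≤ c ^ 2 := by nlinarith
  have h1 : M' ≤ c ^ 2 * m := by
    have : M' / m ≤ c ^ 2 := by
      have : 0 < M / m' := by positivity
      linarith
    rwa [div_le_iff₀ hm] at this
  have h2 : M ≤ c ^ 2 * m' := by
    have : M / m' ≤ c ^ 2 := by
      have : 0 < M' / m := by positivity
      linarith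
    rwa [div_le_iff₀ hm'] at this
  intro r hr x
  obtain ⟨-, a1, a2⟩ := hA r hr x
  obtain ⟨-, b1, b2⟩ := hB r hr x
  constructor
  · calc _ ≤ M' * ‖x‖ ^ 2 := b2
      _ ≤ (c ^ 2 * m) * ‖x‖ ^ 2 := by gcongr
      _ = c ^ 2 * (m * ‖x‖ ^ 2) := by ring
      _ ≤ _ := by gcongr
  · calc _ ≤ M * ‖x‖ ^ 2 := a2
      _ ≤ (c ^ 2 * m') * ‖x‖ ^ 2 := by gcongr
      _ = c ^ 2 * (m' * ‖x‖ ^ 2) := by ring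
      _ ≤ _ := by gcongr

theorem eq_of_kernel_eq (A B : Fin k → (H →L[ℂ] H)) (r : ℝ) (hr : r ≠ 0)
    (P : L2 k H →L[ℂ] L2 k H) (hA : IsPoissonKernel A r P) (hB : IsPoissonKernel B r P) :
    A = B := by
  have key : ∀ (X : Fin k → (H →L[ℂ] H)), IsPoissonKernel X r P → ∀ i h l,
      inner ℂ (P (lp.single 2 (Pi.single i 1) h)) (lp.single 2 0 l) =
        (r : ℂ) * inner ℂ (X i h) l := by
    intro X hX i h l
    rw [hX]
    have e1 : ∑ j, (((0 : Fin k → ℕ) j - (Pi.single i 1 : Fin k → ℕ) j) +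
        ((Pi.single i 1 : Fin k → ℕ) j - (0 : Fin k → ℕ) j)) = 1 := by
      simp
    have e2 : (List.ofFn fun j => X j ^ ((Pi.single i 1 : Fin k → ℕ) j - (0 : Fin k → ℕ) j)).prod
        = X i := by
      simp only [Pi.zero_apply, Nat.sub_zero, List.ofFn_eq_map]
      have : ∀ L : List (Fin k), L.Nodup →
          (L.map fun j => X j ^ ((Pi.single i 1 : Fin k → ℕ) j)).prod
            = if i ∈ L then X i else 1 := by
        intro L
        induction L with
        | nil => simp
        | cons a L ih =>
          intro hL
          obtain ⟨ha, hL⟩ := List.nodup_cons.1 hL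
          rw [List.map_cons, List.prod_cons, ih hL]
          by_cases hai : a = i
          · subst hai; simp [ha]
          · simp [hai, Ne.symm hai]
      rw [this _ (List.nodup_finRange k)]
      simp
    have e3 : (List.ofFn fun j => (adjoint (X j)) ^
        ((0 : Fin k → ℕ) j - (Pi.single i 1 : Fin k → ℕ) j)).prod = 1 := by
      simp
    rw [e1, e2, e3]
    simp
  ext1 i
  ext1 h
  refine ext_inner_right ℂ fun l => ?_
  have h1 := key A hA i h l
  rw [key B hB i h l] at h1
  exact (mul_left_cancel₀ (by exact_mod_cast hr) h1).symm

/-- Any two elements of `D^k(H)` are Poisson equivalent, and `δ_P` is a metric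
on `D^k(H)`: it is nonnegative, symmetric, vanishes exactly on the diagonal, and satisfies
the triangle inequality.  (All notions are expressed via the Poisson kernel families, which
determine the points.) -/
theorem stmt_15 (hk : 1 ≤ k) :
    (∀ (A B : Fin k → (H →L[ℂ] H)) (PA PB : ℝ → (L2 k H →L[ℂ] L2 k H)),
      memPolydisk A → memPolydisk B →
      (∀ r ∈ Set.Ico (0 : ℝ) 1, IsPoissonKernel A r (PA r)) →
      (∀ r ∈ Set.Ico (0 : ℝ) 1, IsPoissonKernel B r (PB r)) →
      PoissonEquiv PA PB ∧ 0 ≤ deltaP PA PB ∧ deltaP PA PB = deltaP PB PA ∧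
        (deltaP PA PB = 0 ↔ A = B)) ∧
    (∀ (A B C : Fin k → (H →L[ℂ] H)) (PA PB PC : ℝ → (L2 k H →L[ℂ] L2 k H)),
      memPolydisk A → memPolydisk B → memPolydisk C →
      (∀ r ∈ Set.Ico (0 : ℝ) 1, IsPoissonKernel A r (PA r)) →
      (∀ r ∈ Set.Ico (0 : ℝ) 1, IsPoissonKernel B r (PB r)) →
      (∀ r ∈ Set.Ico (0 : ℝ) 1, IsPoissonKernel C r (PC r)) →
      deltaP PA PC ≤ deltaP PA PB + deltaP PB PC) := by
  have bA := fun (A : Fin k → (H →L[ℂ] H)) (hA : memPolydisk A) => uniform_bounds A hA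
  have hreal : ∀ (A : Fin k → (H →L[ℂ] H)) (PA : ℝ → (L2 k H →L[ℂ] L2 k H)), memPolydisk A →
      (∀ r ∈ Set.Ico (0 : ℝ) 1, IsPoissonKernel A r (PA r)) →
      ∀ r ∈ Set.Ico (0 : ℝ) 1, ∀ x, (inner ℂ (PA r x) x).im = 0 := by
    intro A PA hA hPA r hr x
    obtain ⟨m, M, -, -, h⟩ := uniform_bounds A hA
    exact (h r hr _ (hPA r hr) x).1
  have hequiv : ∀ (A B : Fin k → (H →L[ℂ] H)) (PA PB : ℝ → (L2 k H →L[ℂ] L2 k H)),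
      memPolydisk A → memPolydisk B →
      (∀ r ∈ Set.Ico (0 : ℝ) 1, IsPoissonKernel A r (PA r)) →
      (∀ r ∈ Set.Ico (0 : ℝ) 1, IsPoissonKernel B r (PB r)) → PoissonEquiv PA PB := by
    intro A B PA PB hA hB hPA hPB
    obtain ⟨m, M, hm, hM, h⟩ := uniform_bounds A hA
    obtain ⟨m', M', hm', hM', h'⟩ := uniform_bounds B hB
    exact equiv_of_bounds PA PB m M m' M' hm hM hm' hM'
      (fun r hr x => h r hr _ (hPA r hr) x) (fun r hr x => h' r hr _ (hPB r hr) x)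
  refine ⟨?_, ?_⟩
  · intro A B PA PB hA hB hPA hPB
    have hE := hequiv A B PA PB hA hB hPA hPB
    have rA := hreal A PA hA hPA
    have rB := hreal B PB hB hPB
    have h1 := sInf_ge_one hE
    refine ⟨hE, Real.log_nonneg h1, ?_, ?_, ?_⟩
    · unfold deltaP
      congr 2
      ext c
      refine and_congr_right fun hc => ?_
      rw [sandwich_iff PA PB c hc rA rB, sandwich_iff PB PA c hc rB rA]
      exact forall₂_congr fun r hr => forall_congr' fun x => and_comm
    · intro h0
      have hs1 : sInf {c : ℝ | 1 ≤ c ∧ PoissonSandwich PA PB c} = 1 :=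
        Real.eq_one_of_pos_of_log_eq_zero (by linarith) h0
      have hhalf : (1 / 2 : ℝ) ∈ Set.Ico (0 : ℝ) 1 := by constructor <;> norm_num
      have hq : ∀ x, qf (PB (1 / 2)) x ≤ qf (PA (1 / 2)) x ∧
          qf (PA (1 / 2)) x ≤ qf (PB (1 / 2)) x := by
        intro x
        have hlim : ∀ a : ℝ, Filter.Tendsto (fun c : ℝ => c ^ 2 * a)
            (nhdsWithin 1 (Set.Ioi 1)) (nhds a) := by
          intro a
          have : Filter.Tendsto (fun c : ℝ => c ^ 2 * a) (nhds 1) (nhds (1 ^ 2 * a)) :=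
            (Continuous.tendsto (by fun_prop) 1)
          rw [one_pow, one_mul] at this
          exact this.mono_left nhdsWithin_le_nhds
        obtain ⟨mA, MA, hmA, -, hbA⟩ := uniform_bounds A hA
        obtain ⟨mB, MB, hmB, -, hbB⟩ := uniform_bounds B hB
        have pA : 0 ≤ qf (PA (1 / 2)) x :=
          le_trans (by positivity) (hbA _ hhalf _ (hPA _ hhalf) x).2.1
        have pB : 0 ≤ qf (PB (1 / 2)) x :=
          le_trans (by positivity) (hbB _ hhalf _ (hPB _ hhalf) x).2.1
        have hc : ∀ c : ℝ, c ∈ Set.Ioi (1 : ℝ) →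
            qf (PB (1 / 2)) x ≤ c ^ 2 * qf (PA (1 / 2)) x ∧
            qf (PA (1 / 2)) x ≤ c ^ 2 * qf (PB (1 / 2)) x := by
          intro c hc
          obtain ⟨c', ⟨hc1, hc2⟩, hc3⟩ := exists_lt_of_csInf_lt hE (hs1.trans_lt hc)
          have := (sandwich_iff PA PB c' hc1 rA rB).1 hc2 _ hhalf x
          have hcc : c' ^ 2 ≤ c ^ 2 := by gcongr
          exact ⟨this.1.trans (by gcongr), this.2.trans (by gcongr)⟩
        constructor
        · exact ge_of_tendsto (hlim _) (by
            filter_upwards [self_mem_nhdsWithin] with c h using (hc c h).1)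
        · exact ge_of_tendsto (hlim _) (by
            filter_upwards [self_mem_nhdsWithin] with c h using (hc c h).2)
      have hP : PA (1 / 2) = PB (1 / 2) := by
        apply ContinuousLinearMap.coe_injective
        rw [← ext_inner_map]
        intro x
        apply Complex.ext
        · exact le_antisymm (hq x).2 (hq x).1
        · exact (rA _ hhalf x).trans (rB _ hhalf x).symm
      exact eq_of_kernel_eq A B (1 / 2) (by norm_num) _ (hPA _ hhalf)
        (hP ▸ hPB _ hhalf)
    · rintro rfl
      have hPP : ∀ r ∈ Set.Ico (0 : ℝ) 1, PA r = PB r := by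
        intro r hr
        refine lp.ext_continuousLinearMap (by norm_num) fun β => ?_
        ext h α
        refine ext_inner_right ℂ fun l => ?_
        rw [← lp.inner_single_right, ← lp.inner_single_right]
        exact (hPA r hr α β h l).trans (hPB r hr α β h l).symm
      have hmem : (1 : ℝ) ∈ {c : ℝ | 1 ≤ c ∧ PoissonSandwich PA PB c} := by
        refine ⟨le_rfl, (sandwich_iff PA PB 1 le_rfl rA rB).2 fun r hr x => ?_⟩
        rw [hPP r hr]; simp
      have : sInf {c : ℝ | 1 ≤ c ∧ PoissonSandwich PA PB c} = 1 :=
        le_antisymm (csInf_le ⟨1, fun c hc => hc.1⟩ hmem) h1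
      unfold deltaP
      rw [this, Real.log_one]
  · intro A B C PA PB PC hA hB hC hPA hPB hPC
    have rA := hreal A PA hA hPA
    have rB := hreal B PB hB hPB
    have rC := hreal C PC hC hPC
    have eAB := hequiv A B PA PB hA hB hPA hPB
    have eBC := hequiv B C PB PC hB hC hPB hPC
    have eAC := hequiv A C PA PC hA hC hPA hPC
    have iAB := sInf_ge_one eAB
    have iBC := sInf_ge_one eBC
    have iAC := sInf_ge_one eAC
    unfold deltaP
    rw [← Real.log_mul (by linarith) (by linarith)]
    refine Real.log_le_log (by linarith) ?_
    have key : ∀ c1 ∈ {c : ℝ | 1 ≤ c ∧ PoissonSandwich PA PB c},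
        ∀ c2 ∈ {c : ℝ | 1 ≤ c ∧ PoissonSandwich PB PC c},
        sInf {c : ℝ | 1 ≤ c ∧ PoissonSandwich PA PC c} ≤ c1 * c2 := by
      rintro c1 ⟨h1, s1⟩ c2 ⟨h2, s2⟩
      have h12 : 1 ≤ c1 * c2 := by nlinarith
      refine csInf_le ⟨1, fun c hc => hc.1⟩ ⟨h12, ?_⟩
      rw [sandwich_iff _ _ _ h1 rA rB] at s1
      rw [sandwich_iff _ _ _ h2 rB rC] at s2
      rw [sandwich_iff _ _ _ h12 rA rC]
      intro r hr x
      obtain ⟨a1, a2⟩ := s1 r hr x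
      obtain ⟨b1, b2⟩ := s2 r hr x
      rw [mul_pow]
      constructor
      · calc _ ≤ c2 ^ 2 * qf (PB r) x := b1
          _ ≤ c2 ^ 2 * (c1 ^ 2 * qf (PA r) x) := by gcongr
          _ = _ := by ring
      · calc _ ≤ c1 ^ 2 * qf (PB r) x := a2
          _ ≤ c1 ^ 2 * (c2 ^ 2 * qf (PC r) x) := by gcongr
          _ = _ := by ring
    have step : ∀ c1 ∈ {c : ℝ | 1 ≤ c ∧ PoissonSandwich PA PB c},
        sInf {c : ℝ | 1 ≤ c ∧ PoissonSandwich PA PC c} ≤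
          c1 * sInf {c : ℝ | 1 ≤ c ∧ PoissonSandwich PB PC c} := by
      intro c1 hc1
      have hc1' : 0 < c1 := by linarith [hc1.1]
      rw [← div_le_iff₀' hc1']
      exact le_csInf eBC fun c2 hc2 => by
        rw [div_le_iff₀' hc1']; exact key c1 hc1 c2 hc2
    rw [← div_le_iff₀ (by linarith)]
    exact le_csInf eAB fun c1 hc1 => by
      rw [div_le_iff₀ (by linarith)]; exact step c1 hc1

end
end

section
/- The metric δ_P is complete on D^k(H), and the δ_P-topology coincides with the operator-norm topology on D^k(H): (a) every δ_P-Cauchy sequence in D^k(H) converges in δ_P to an element of D^k(H); (b) for a sequence (A^{(m)}) in D^k(H) and A ∈ D^k(H), δ_P(A^{(m)}, A) → 0 if and only if max_{1≤i≤k} ‖A_i^{(m)} − A_i‖ → 0. -/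
open ContinuousLinearMap

noncomputable section

variable {k : ℕ} {H : Type*} [NormedAddCommGroup H] [InnerProductSpace ℂ H] [CompleteSpace H]

set_option linter.unusedSectionVars false
set_option linter.unusedSimpArgs false

/-! ### Part 1: algebra of the entries -/

/-- Matrix entries with a middle operator. -/
def ent {n : ℕ} (X : Fin n → (H →L[ℂ] H)) (Y : H →L[ℂ] H) (α β : Fin n → ℕ) : H →L[ℂ] H :=
  (List.ofFn fun i => X i ^ (β i - α i)).prod * Y *
    (List.ofFn fun i => (adjoint (X i)) ^ (α i - β i)).prod

/-- The defect map with a general argument. -/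
def dfct {n : ℕ} (X : Fin n → (H →L[ℂ] H)) (Y : H →L[ℂ] H) : H →L[ℂ] H :=
  ((List.ofFn fun i => fun Y : H →L[ℂ] H => Y - X i * Y * adjoint (X i)).foldr (· ∘ ·) id) Y

/-- Finite boxes in `ℕ^n`. -/
def box (n N : ℕ) : Finset (Fin n → ℕ) := Fintype.piFinset fun _ => Finset.range N

/-- Sesquilinear form attached to the tuple. -/
def fm {n : ℕ} (X : Fin n → (H →L[ℂ] H)) (Y : H →L[ℂ] H) (N : ℕ)
    (g h : (Fin n → ℕ) → H) : ℂ :=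
  ∑ α ∈ box n N, ∑ β ∈ box n N, inner ℂ (ent X Y α β (g β)) (h α)

def nsq (n N : ℕ) (h : (Fin n → ℕ) → H) : ℝ := ∑ α ∈ box n N, ‖h α‖ ^ 2

lemma sum_box_succ {M : Type*} [AddCommMonoid M] (n N : ℕ) (f : (Fin (n+1) → ℕ) → M) :
    ∑ α ∈ box (n+1) N, f α = ∑ a ∈ Finset.range N, ∑ α ∈ box n N, f (Fin.cons a α) := by
  rw [← Finset.sum_product']
  refine Finset.sum_nbij' (fun α => (α 0, Fin.tail α)) (fun p => Fin.cons p.1 p.2) ?_ ?_ ?_ ?_ ?_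
  · intro α hα
    simp only [box, Fintype.mem_piFinset, Finset.mem_product] at *
    exact ⟨hα 0, fun i => hα i.succ⟩
  · rintro ⟨a, α⟩ h
    simp only [box, Fintype.mem_piFinset, Finset.mem_product] at *
    intro i
    refine Fin.cases ?_ ?_ i
    · simpa using h.1
    · intro j; simpa using h.2 j
  · intro α _; simp
  · rintro ⟨a, α⟩ _; simp
  · intro α _; simp

lemma commute_list {n : ℕ} (X : Fin n → (H →L[ℂ] H)) (Z : H →L[ℂ] H)
    (hZ : ∀ i, Commute Z (X i)) (p : Fin n → ℕ) :
    Commute Z (List.ofFn fun i => X i ^ (p i)).prod := by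
  apply Commute.list_prod_right
  intro x hx
  rw [List.mem_ofFn] at hx
  obtain ⟨i, rfl⟩ := hx
  exact (hZ i).pow_right _

lemma commute_adj {X Y : H →L[ℂ] H} (h : Commute X Y) : Commute (adjoint X) (adjoint Y) := by
  have := h.star_star
  simpa [star_eq_adjoint] using this

lemma ent_cons {n : ℕ} (X : Fin (n+1) → (H →L[ℂ] H)) (hX : ∀ i j, Commute (X i) (X j))
    (Y : H →L[ℂ] H) (a b : ℕ) (α β : Fin n → ℕ) :
    ent X Y (Fin.cons a α) (Fin.cons b β) =
      ent (fun i => X i.succ) (X 0 ^ (b - a) * Y * adjoint (X 0) ^ (a - b)) α β := by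
  have h1 := commute_list (fun i => X i.succ) (X 0 ^ (b - a)) (fun i => (hX 0 i.succ).pow_left _)
    (fun i => β i - α i)
  simp only [ent, List.ofFn_succ, List.prod_cons, Fin.cons_zero, Fin.cons_succ]
  rw [h1.eq]
  simp only [mul_assoc]

lemma ent_conj {n : ℕ} (X : Fin n → (H →L[ℂ] H)) (Z : H →L[ℂ] H)
    (hZ : ∀ i, Commute Z (X i)) (Y : H →L[ℂ] H) (i j : ℕ) (α β : Fin n → ℕ) (x y : H) :
    inner ℂ (ent X Y α β ((adjoint Z ^ j) x)) ((adjoint Z ^ i) y) =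
      inner ℂ (ent X (Z ^ i * Y * adjoint Z ^ j) α β x) y := by
  have h1 := commute_list X (Z ^ i) (fun l => (hZ l).pow_left _) (fun i => β i - α i)
  have h2 := commute_list (fun l => adjoint (X l)) (adjoint Z ^ j)
    (fun l => (commute_adj (hZ l)).pow_left _) (fun i => α i - β i)
  have h3 : adjoint Z ^ i = adjoint (Z ^ i) := by
    simp [← star_eq_adjoint, star_pow]
  rw [h3, adjoint_inner_right]
  simp only [← mul_apply_eq_comp]
  congr 2
  simp only [ent]
  rw [mul_assoc _ _ (adjoint Z ^ j), ← h2.eq]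
  simp only [← mul_assoc]
  rw [h1.eq]

lemma ent_sub {n : ℕ} (X : Fin n → (H →L[ℂ] H)) (Y Y' : H →L[ℂ] H) (α β : Fin n → ℕ) :
    ent X (Y - Y') α β = ent X Y α β - ent X Y' α β := by
  simp [ent, mul_sub, sub_mul]

lemma dfct_succ {n : ℕ} (X : Fin (n+1) → (H →L[ℂ] H)) (Y : H →L[ℂ] H) :
    dfct X Y = dfct (fun i => X i.succ) Y - X 0 * dfct (fun i => X i.succ) Y * adjoint (X 0) := by
  simp [dfct, List.ofFn_succ]

lemma dfct_conj : ∀ {n : ℕ} (X : Fin n → (H →L[ℂ] H)) (Z : H →L[ℂ] H)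
    (_ : ∀ i, Commute Z (X i)) (Y : H →L[ℂ] H),
    dfct X (Y - Z * Y * adjoint Z) = dfct X Y - Z * dfct X Y * adjoint Z
  | 0, X, Z, hZ, Y => by simp [dfct]
  | n+1, X, Z, hZ, Y => by
    have h1 := (hZ 0).eq
    have h2 := (commute_adj (hZ 0)).eq
    rw [dfct_succ, dfct_succ, dfct_conj _ Z (fun i => hZ i.succ)]
    generalize dfct (fun i : Fin n => X i.succ) Y = W
    have : X 0 * (Z * W * adjoint Z) * adjoint (X 0) = Z * (X 0 * W * adjoint (X 0)) * adjoint Z := by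
      calc _ = (X 0 * Z) * W * (adjoint Z * adjoint (X 0)) := by simp only [mul_assoc]
        _ = (Z * X 0) * W * (adjoint (X 0) * adjoint Z) := by rw [h1, h2]
        _ = _ := by simp only [mul_assoc]
    simp only [mul_sub, sub_mul, this]
    abel

lemma dfct_step {n : ℕ} (X : Fin (n+1) → (H →L[ℂ] H)) (hX : ∀ i j, Commute (X i) (X j))
    (Y : H →L[ℂ] H) :
    dfct X Y = dfct (fun i => X i.succ) (Y - X 0 * Y * adjoint (X 0)) := by
  rw [dfct_conj _ _ (fun i => hX 0 i.succ), dfct_succ]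

/-- abstract one-variable identity -/
lemma abstract_id {V : Type*} [AddCommGroup V] [Module ℂ V] (B : V →+ V →+ ℂ) (L : V →ₗ[ℂ] V)
    (h : ℕ → V) (Z : ℕ → V) (hZ0 : Z 0 = 0) (hZ : ∀ m, Z (m+1) = L (Z m + h m)) (M : ℕ) :
    ∑ a ∈ Finset.range M, ∑ b ∈ Finset.range M, B ((L ^ (a - b)) (h b)) ((L ^ (b - a)) (h a)) =
    ∑ c ∈ Finset.range M, (B (Z c + h c) (Z c + h c) - B (L (Z c + h c)) (L (Z c + h c)))
      + B (Z M) (Z M) := by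
  have hZs : ∀ M, Z M = ∑ b ∈ Finset.range M, (L ^ (M - b)) (h b) := by
    intro M
    induction M with
    | zero => simp [hZ0]
    | succ M ih =>
      rw [hZ, ih, Finset.sum_range_succ, map_add, map_sum]
      congr 1
      · apply Finset.sum_congr rfl
        intro b hb
        have : M + 1 - b = (M - b) + 1 := by have := Finset.mem_range.1 hb; omega
        rw [this, pow_succ']; rfl
      · simp
  induction M with
  | zero => simp [hZ0]
  | succ M ih =>
    rw [Finset.sum_range_succ]
    simp_rw [Finset.sum_range_succ (n := M)]
    rw [Finset.sum_add_distrib, ih]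
    have e1 : ∑ x ∈ Finset.range M, B ((L ^ (x - M)) (h M)) ((L ^ (M - x)) (h x))
        = B (h M) (Z M) := by
      rw [hZs M, map_sum]
      apply Finset.sum_congr rfl
      intro b hb
      have : b - M = 0 := by have := Finset.mem_range.1 hb; omega
      simp [this]
    have e2 : ∑ x ∈ Finset.range M, B ((L ^ (M - x)) (h x)) ((L ^ (x - M)) (h M))
        = B (Z M) (h M) := by
      rw [hZs M, map_sum, AddMonoidHom.finsetSum_apply]
      apply Finset.sum_congr rfl
      intro b hb
      have : b - M = 0 := by have := Finset.mem_range.1 hb; omega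
      simp [this]
    rw [e1, e2, hZ M]
    simp only [map_add, AddMonoidHom.add_apply, Nat.sub_self, pow_zero, Module.End.one_apply]
    ring

/-- The form as a biadditive map. -/
def Bf {n : ℕ} (X : Fin n → (H →L[ℂ] H)) (Y : H →L[ℂ] H) (N : ℕ) :
    ((Fin n → ℕ) → H) →+ ((Fin n → ℕ) → H) →+ ℂ :=
  AddMonoidHom.mk' (fun g => AddMonoidHom.mk' (fun h => fm X Y N g h)
    (by intro a b; simp [fm, inner_add_right, Finset.sum_add_distrib]))
    (by intro a b; ext h; simp [fm, inner_add_left, Finset.sum_add_distrib])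

lemma Bf_apply {n : ℕ} (X : Fin n → (H →L[ℂ] H)) (Y : H →L[ℂ] H) (N : ℕ)
    (g h : (Fin n → ℕ) → H) : Bf X Y N g h = fm X Y N g h := rfl

/-- pointwise application -/
def pw {n : ℕ} (Z : H →L[ℂ] H) : ((Fin n → ℕ) → H) →ₗ[ℂ] ((Fin n → ℕ) → H) where
  toFun h := fun α => Z (h α)
  map_add' := by intro a b; ext; simp
  map_smul' := by intro a b; ext; simp

lemma pw_pow {n : ℕ} (Z : H →L[ℂ] H) (j : ℕ) (h : (Fin n → ℕ) → H) (α : Fin n → ℕ) :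
    ((pw Z ^ j) h) α = (Z ^ j) (h α) := by
  induction j generalizing h with
  | zero => simp
  | succ j ih => rw [pow_succ, Module.End.mul_apply, ih, pow_succ]; rfl

lemma fm_conj {n : ℕ} (X : Fin n → (H →L[ℂ] H)) (Z : H →L[ℂ] H)
    (hZ : ∀ i, Commute Z (X i)) (Y : H →L[ℂ] H) (N i j : ℕ) (g h : (Fin n → ℕ) → H) :
    fm X Y N ((pw (adjoint Z) ^ j) g) ((pw (adjoint Z) ^ i) h) =
      fm X (Z ^ i * Y * adjoint Z ^ j) N g h := by
  simp only [fm, pw_pow, ent_conj X Z hZ]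

lemma fm_sub {n : ℕ} (X : Fin n → (H →L[ℂ] H)) (Y Y' : H →L[ℂ] H) (N : ℕ)
    (g h : (Fin n → ℕ) → H) : fm X (Y - Y') N g h = fm X Y N g h - fm X Y' N g h := by
  simp [fm, ent_sub, inner_sub_left, Finset.sum_sub_distrib]

lemma fm_succ {n : ℕ} (X : Fin (n+1) → (H →L[ℂ] H)) (hX : ∀ i j, Commute (X i) (X j))
    (Y : H →L[ℂ] H) (N : ℕ) (h : (Fin (n+1) → ℕ) → H) :
    fm X Y N h h = ∑ a ∈ Finset.range N, ∑ b ∈ Finset.range N,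
      Bf (fun i => X i.succ) Y N ((pw (adjoint (X 0)) ^ (a - b)) (fun β => h (Fin.cons b β)))
        ((pw (adjoint (X 0)) ^ (b - a)) (fun β => h (Fin.cons a β))) := by
  simp only [Bf_apply, fm_conj _ (X 0) (fun i => hX 0 i.succ)]
  rw [fm, sum_box_succ]
  simp_rw [sum_box_succ]
  apply Finset.sum_congr rfl
  intro a _
  rw [Finset.sum_comm]
  simp only [fm, ent_cons X hX]

lemma Bf_diff {n : ℕ} (X : Fin (n+1) → (H →L[ℂ] H)) (hX : ∀ i j, Commute (X i) (X j))
    (Y : H →L[ℂ] H) (N : ℕ) (g : (Fin n → ℕ) → H) :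
    fm (fun i => X i.succ) (Y - X 0 * Y * adjoint (X 0)) N g g =
    Bf (fun i => X i.succ) Y N g g -
      Bf (fun i => X i.succ) Y N (pw (adjoint (X 0)) g) (pw (adjoint (X 0)) g) := by
  have := fm_conj (fun i => X i.succ) (X 0) (fun i => hX 0 i.succ) Y N 1 1 g g
  simp only [pow_one] at this
  rw [fm_sub, Bf_apply, Bf_apply, this]

/-! ### Part 2: lower bound and defect test -/

lemma nsq_succ (n N : ℕ) (h : (Fin (n+1) → ℕ) → H) :
    nsq (n+1) N h = ∑ a ∈ Finset.range N, nsq n N (fun β => h (Fin.cons a β)) := by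
  simp only [nsq, sum_box_succ]

lemma nsq_nonneg (n N : ℕ) (h : (Fin n → ℕ) → H) : 0 ≤ nsq n N h := by
  unfold nsq; positivity

lemma nsq_pw (n N : ℕ) (Z : H →L[ℂ] H) (hZ : ‖Z‖ ≤ 1) (g : (Fin n → ℕ) → H) :
    nsq n N (pw Z g) ≤ nsq n N g := by
  unfold nsq
  apply Finset.sum_le_sum
  intro α _
  have : ‖Z (g α)‖ ≤ ‖g α‖ := by
    calc _ ≤ ‖Z‖ * ‖g α‖ := Z.le_opNorm _
      _ ≤ 1 * ‖g α‖ := by gcongr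
      _ = _ := one_mul _
  show ‖Z (g α)‖ ^ 2 ≤ _
  gcongr

lemma nsq_add_le (n N : ℕ) (g h z : (Fin n → ℕ) → H) (hz : h = g - z) :
    nsq n N h ≤ 2 * nsq n N g + 2 * nsq n N z := by
  unfold nsq
  rw [Finset.mul_sum, Finset.mul_sum, ← Finset.sum_add_distrib]
  apply Finset.sum_le_sum
  intro α _
  have : ‖h α‖ ≤ ‖g α‖ + ‖z α‖ := by rw [hz]; exact norm_sub_le _ _
  nlinarith [norm_nonneg (h α), norm_nonneg (g α), norm_nonneg (z α), sq_nonneg (‖g α‖ - ‖z α‖)]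

lemma adj_norm (X : H →L[ℂ] H) : ‖adjoint X‖ = ‖X‖ := by
  rw [← star_eq_adjoint, norm_star]

lemma fm_tendsto_zero {n : ℕ} (X : Fin n → (H →L[ℂ] H)) (Y Z : H →L[ℂ] H) (N : ℕ)
    (hZ : ‖Z‖ < 1) (g : (Fin n → ℕ) → H) :
    Filter.Tendsto (fun j : ℕ => (fm X Y N ((pw Z ^ j) g) ((pw Z ^ j) g)).re) Filter.atTop
      (nhds 0) := by
  have h0 : ∀ x : H, Filter.Tendsto (fun j : ℕ => (Z ^ j) x) Filter.atTop (nhds 0) := by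
    intro x
    have h1 : Filter.Tendsto (fun j : ℕ => Z ^ j) Filter.atTop (nhds 0) :=
      tendsto_pow_atTop_nhds_zero_of_norm_lt_one hZ
    have := ((ContinuousLinearMap.apply ℂ H x).continuous.tendsto 0).comp h1
    rw [map_zero] at this
    exact this
  have : Filter.Tendsto (fun j : ℕ => fm X Y N ((pw Z ^ j) g) ((pw Z ^ j) g)) Filter.atTop
      (nhds (∑ α ∈ box n N, ∑ β ∈ box n N, (0:ℂ))) := by
    unfold fm
    apply tendsto_finsetSum
    intro α _
    apply tendsto_finsetSum
    intro β _
    simp only [pw_pow]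
    have h1 := ((ent X Y α β).continuous.tendsto 0).comp (h0 (g β))
    have h2 := h1.inner (𝕜 := ℂ) (h0 (g α))
    simpa using h2
  have h3 := (Complex.continuous_re.tendsto _).comp this
  simp only [Finset.sum_const_zero, Complex.zero_re] at h3
  exact h3

theorem lower_bound : ∀ {n : ℕ} (X : Fin n → (H →L[ℂ] H)) (_ : ∀ i j, Commute (X i) (X j))
    (_ : ∀ i, ‖X i‖ < 1) (Y : H →L[ℂ] H) (ε : ℝ) (_ : 0 ≤ ε)
    (_ : ∀ x, ε * ‖x‖ ^ 2 ≤ (inner ℂ (dfct X Y x) x).re) (N : ℕ) (h : (Fin n → ℕ) → H),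
    ε / 4 ^ n * nsq n N h ≤ (fm X Y N h h).re
  | 0, X, hX, hX1, Y, ε, hε, hY, N, h => by
    have : box 0 N = {default} := by
      ext a; simp only [box, Fintype.mem_piFinset, Finset.mem_singleton]
      exact ⟨fun _ => Subsingleton.elim _ _, fun _ i => i.elim0⟩
    simp only [nsq, fm, this, Finset.sum_singleton]
    simpa [dfct, ent] using hY (h default)
  | n+1, X, hX, hX1, Y, ε, hε, hY, N, h => by
    have IH := fun g => lower_bound (fun i => X i.succ) (fun i j => hX _ _) (fun i => hX1 _)
      (Y - X 0 * Y * adjoint (X 0)) ε hε (by rw [← dfct_step X hX]; exact hY) N g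
    have hL : ‖adjoint (X 0)‖ < 1 := by rw [adj_norm]; exact hX1 0
    set L : ((Fin n → ℕ) → H) →ₗ[ℂ] ((Fin n → ℕ) → H) := pw (adjoint (X 0)) with hLdef
    set B := Bf (fun i => X i.succ) Y N with hB
    let hh : ℕ → (Fin n → ℕ) → H := fun a β => h (Fin.cons a β)
    let Z : ℕ → (Fin n → ℕ) → H := fun m => Nat.rec 0 (fun m z => L (z + hh m)) m
    have hZ0 : Z 0 = 0 := rfl
    have hZ : ∀ m, Z (m+1) = L (Z m + hh m) := fun m => rfl
    have key := abstract_id B L hh Z hZ0 hZ N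
    have hd := fun g => Bf_diff X hX Y N g
    have hpos : ∀ z, 0 ≤ (B z z).re := by
      intro z
      have hdec : ∀ j : ℕ, (B ((L ^ j) z) ((L ^ j) z)).re ≤ (B z z).re := by
        intro j
        induction j with
        | zero => simp
        | succ j ih =>
          refine le_trans ?_ ih
          have h1 := IH ((L ^ j) z)
          rw [hd, Complex.sub_re] at h1
          have h2 : 0 ≤ ε / 4 ^ n * nsq n N ((L ^ j) z) :=
            mul_nonneg (by positivity) (nsq_nonneg _ _ _)
          rw [pow_succ', Module.End.mul_apply]
          linarith
      exact le_of_tendsto (fm_tendsto_zero _ Y _ N hL z) (Filter.Eventually.of_forall hdec)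
    rw [fm_succ X hX, key, Complex.add_re, Complex.re_sum]
    have hG : ∑ c ∈ Finset.range N, ε / 4 ^ n * nsq n N (Z c + hh c) ≤
        ∑ c ∈ Finset.range N, (B (Z c + hh c) (Z c + hh c) -
          B (L (Z c + hh c)) (L (Z c + hh c))).re := by
      apply Finset.sum_le_sum
      intro c _
      rw [← hd]; exact IH _
    have hZs : ∀ M, ∑ c ∈ Finset.range M, nsq n N (Z c) ≤
        ∑ c ∈ Finset.range M, nsq n N (Z c + hh c) := by
      intro M
      cases M with
      | zero => simp
      | succ M =>
        rw [Finset.sum_range_succ', Finset.sum_range_succ]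
        have h1 : nsq n N (Z 0) = 0 := by simp [hZ0, nsq]
        have h2 : ∑ c ∈ Finset.range M, nsq n N (Z (c+1)) ≤
            ∑ c ∈ Finset.range M, nsq n N (Z c + hh c) := by
          apply Finset.sum_le_sum
          intro c _
          rw [hZ]; exact nsq_pw _ _ _ hL.le _
        have := nsq_nonneg n N (Z M + hh M)
        linarith
    have hN : nsq (n+1) N h ≤ 4 * ∑ c ∈ Finset.range N, nsq n N (Z c + hh c) := by
      rw [nsq_succ]
      calc _ ≤ ∑ c ∈ Finset.range N, (2 * nsq n N (Z c + hh c) + 2 * nsq n N (Z c)) := by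
            apply Finset.sum_le_sum
            intro c _
            exact nsq_add_le _ _ _ _ _ (by simp [hh])
        _ ≤ _ := by
          rw [Finset.sum_add_distrib, ← Finset.mul_sum, ← Finset.mul_sum]
          have := hZs N
          linarith
    rw [← Finset.mul_sum] at hG
    have h4 : ε / 4 ^ (n+1) * nsq (n+1) N h ≤
        ε / 4 ^ n * ∑ c ∈ Finset.range N, nsq n N (Z c + hh c) := by
      calc _ ≤ ε / 4 ^ (n+1) * (4 * ∑ c ∈ Finset.range N, nsq n N (Z c + hh c)) := by gcongr
        _ = _ := by rw [pow_succ]; field_simp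
    have := hpos (Z N)
    linarith

/-- test vectors for the defect operator -/
theorem defect_test : ∀ {n : ℕ} (X : Fin n → (H →L[ℂ] H)) (_ : ∀ i j, Commute (X i) (X j))
    (Y : H →L[ℂ] H) (x : H), ∃ h : (Fin n → ℕ) → H, h 0 = x ∧
      fm X Y 2 h h = inner ℂ (dfct X Y x) x
  | 0, X, hX, Y, x => by
    have : box 0 2 = {default} := by
      ext a; simp only [box, Fintype.mem_piFinset, Finset.mem_singleton]
      exact ⟨fun _ => Subsingleton.elim _ _, fun _ i => i.elim0⟩
    refine ⟨fun _ => x, rfl, ?_⟩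
    simp [fm, this, dfct, ent]
  | n+1, X, hX, Y, x => by
    obtain ⟨g, hg0, hg⟩ := defect_test (fun i => X i.succ) (fun i j => hX _ _)
      (Y - X 0 * Y * adjoint (X 0)) x
    refine ⟨fun α => if α 0 = 0 then g (Fin.tail α) else - adjoint (X 0) (g (Fin.tail α)), ?_, ?_⟩
    · have : Fin.tail (0 : Fin (n+1) → ℕ) = 0 := rfl
      simp [this, hg0]
    · rw [dfct_step X hX, ← hg, Bf_diff X hX, fm_succ X hX]
      have e0 : ∀ u : (Fin n → ℕ) → H, (fun β => - adjoint (X 0) (u β)) = - pw (adjoint (X 0)) u :=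
        fun u => rfl
      have e1 : (fun β => g β) = g := rfl
      simp [Finset.sum_range_succ, e0, e1, sub_eq_add_neg]

/-! ### Part 3: Schur bounds and multipliers -/

def dd {n : ℕ} (α β : Fin n → ℕ) : ℕ := ∑ i, ((α i - β i) + (β i - α i))

def gf {n : ℕ} (M : (Fin n → ℕ) → (Fin n → ℕ) → (H →L[ℂ] H)) (N : ℕ)
    (h : (Fin n → ℕ) → H) : ℂ :=
  ∑ α ∈ box n N, ∑ β ∈ box n N, inner ℂ (M α β (h β)) (h α)

lemma fm_eq_gf {n : ℕ} (X : Fin n → (H →L[ℂ] H)) (Y : H →L[ℂ] H) (N : ℕ)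
    (h : (Fin n → ℕ) → H) : fm X Y N h h = gf (ent X Y) N h := rfl

lemma row_bound1 (t : ℝ) (ht0 : 0 ≤ t) (ht : t < 1) (N b : ℕ) :
    ∑ a ∈ Finset.range N, t ^ ((a - b) + (b - a)) ≤ 2 / (1 - t) := by
  have h1t : 0 < 1 - t := by linarith
  have hF : ∀ b : ℕ, ∑ a ∈ Finset.range b, t ^ (b - a) ≤ t / (1 - t) := by
    intro b
    induction b with
    | zero => simp; positivity
    | succ b ih =>
      rw [Finset.sum_range_succ]
      have : ∑ a ∈ Finset.range b, t ^ (b + 1 - a) = t * ∑ a ∈ Finset.range b, t ^ (b - a) := by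
        rw [Finset.mul_sum]
        apply Finset.sum_congr rfl
        intro a ha
        have : b + 1 - a = (b - a) + 1 := by have := Finset.mem_range.1 ha; omega
        rw [this, pow_succ']
      rw [this]
      have e : t / (1 - t) = t * (t / (1 - t)) + t := by field_simp; ring
      have : b + 1 - b = 1 := by omega
      rw [this, pow_one, e]
      gcongr
  have hG : ∀ N : ℕ, ∑ j ∈ Finset.range N, t ^ j ≤ 1 / (1 - t) := by
    intro N
    induction N with
    | zero => rw [Finset.sum_range_zero]; positivity
    | succ N ih =>
      rw [Finset.sum_range_succ']
      have : ∑ a ∈ Finset.range N, t ^ (a + 1) = t * ∑ a ∈ Finset.range N, t ^ a := by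
        rw [Finset.mul_sum]
        exact Finset.sum_congr rfl fun a _ => pow_succ' _ _
      rw [this]
      have e : 1 / (1 - t) = t * (1 / (1 - t)) + 1 := by field_simp; ring
      rw [pow_zero, e]
      gcongr
  calc _ ≤ ∑ a ∈ Finset.range (b + N), t ^ ((a - b) + (b - a)) := by
        apply Finset.sum_le_sum_of_subset_of_nonneg
        · intro a; simp; omega
        · intros; positivity
    _ = ∑ a ∈ Finset.range b, t ^ (b - a) + ∑ j ∈ Finset.range N, t ^ j := by
        rw [Finset.sum_range_add]
        congr 1
        · apply Finset.sum_congr rfl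
          intro a ha
          have := Finset.mem_range.1 ha
          congr 1; omega
        · apply Finset.sum_congr rfl
          intro a ha
          congr 1; omega
    _ ≤ t / (1 - t) + 1 / (1 - t) := add_le_add (hF b) (hG N)
    _ ≤ _ := by rw [← add_div]; gcongr; linarith

lemma row_bound {n : ℕ} (t : ℝ) (ht0 : 0 ≤ t) (ht : t < 1) (N : ℕ) (β : Fin n → ℕ) :
    ∑ α ∈ box n N, t ^ dd α β ≤ (2 / (1 - t)) ^ n := by
  have : ∀ α : Fin n → ℕ, t ^ dd α β = ∏ i, t ^ ((α i - β i) + (β i - α i)) := by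
    intro α; rw [dd, Finset.prod_pow_eq_pow_sum]
  simp_rw [this]
  have h2 := Finset.prod_univ_sum (fun _ : Fin n => Finset.range N)
    (fun i a => t ^ ((a - β i) + (β i - a)))
  rw [box, ← h2]
  calc _ ≤ ∏ i : Fin n, (2 / (1 - t)) :=
        Finset.prod_le_prod (fun i _ => Finset.sum_nonneg fun a _ => by positivity)
          (fun i _ => row_bound1 t ht0 ht N _)
    _ = _ := by rw [Finset.prod_const, Finset.card_univ, Fintype.card_fin]

lemma dd_comm {n : ℕ} (α β : Fin n → ℕ) : dd α β = dd β α := by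
  simp only [dd, add_comm]

theorem schur_bound {n : ℕ} (M : (Fin n → ℕ) → (Fin n → ℕ) → (H →L[ℂ] H)) (K t : ℝ)
    (hK : 0 ≤ K) (ht0 : 0 ≤ t) (ht : t < 1) (hM : ∀ α β, ‖M α β‖ ≤ K * t ^ dd α β)
    (N : ℕ) (h : (Fin n → ℕ) → H) :
    ‖gf M N h‖ ≤ K * (2 / (1 - t)) ^ n * nsq n N h := by
  have h1 : ‖gf M N h‖ ≤ ∑ α ∈ box n N, ∑ β ∈ box n N,
      (K / 2 * t ^ dd α β * ‖h β‖ ^ 2 + K / 2 * t ^ dd α β * ‖h α‖ ^ 2) := by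
    unfold gf
    refine (norm_sum_le _ _).trans (Finset.sum_le_sum fun α _ => ?_)
    refine (norm_sum_le _ _).trans (Finset.sum_le_sum fun β _ => ?_)
    calc _ ≤ ‖M α β (h β)‖ * ‖h α‖ := norm_inner_le_norm _ _
      _ ≤ (‖M α β‖ * ‖h β‖) * ‖h α‖ := by gcongr; exact (M α β).le_opNorm _
      _ ≤ (K * t ^ dd α β * ‖h β‖) * ‖h α‖ := by gcongr; exact hM α β
      _ = K * t ^ dd α β * (‖h β‖ * ‖h α‖) := by ring
      _ ≤ K * t ^ dd α β * ((‖h β‖ ^ 2 + ‖h α‖ ^ 2) / 2) := by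
          gcongr; nlinarith [sq_nonneg (‖h β‖ - ‖h α‖)]
      _ = _ := by ring
  refine h1.trans ?_
  simp_rw [Finset.sum_add_distrib]
  have hb : ∀ β : Fin n → ℕ, ∑ α ∈ box n N, K / 2 * t ^ dd α β * ‖h β‖ ^ 2 ≤
      K / 2 * (2 / (1 - t)) ^ n * ‖h β‖ ^ 2 := by
    intro β
    rw [← Finset.sum_mul, ← Finset.mul_sum]
    have := row_bound t ht0 ht N β
    gcongr
  have e1 : ∑ α ∈ box n N, ∑ β ∈ box n N, K / 2 * t ^ dd α β * ‖h β‖ ^ 2 ≤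
      K / 2 * (2 / (1 - t)) ^ n * nsq n N h := by
    rw [Finset.sum_comm, nsq, Finset.mul_sum]
    exact Finset.sum_le_sum fun β _ => hb β
  have e2 : ∑ α ∈ box n N, ∑ β ∈ box n N, K / 2 * t ^ dd α β * ‖h α‖ ^ 2 ≤
      K / 2 * (2 / (1 - t)) ^ n * nsq n N h := by
    rw [nsq, Finset.mul_sum]
    refine Finset.sum_le_sum fun β _ => ?_
    simp_rw [dd_comm β]
    exact hb β
  linarith

/-- Relation used for perturbation bounds. -/
def PRel (X Y : H →L[ℂ] H) (s r : ℝ) : Prop := 0 ≤ r ∧ ‖Y‖ ≤ r ∧ ‖X - Y‖ ≤ s - r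

lemma PRel.mul {X Y X' Y' : H →L[ℂ] H} {s r s' r' : ℝ} (h : PRel X Y s r) (h' : PRel X' Y' s' r') :
    PRel (X * X') (Y * Y') (s * s') (r * r') := by
  obtain ⟨a, b, c⟩ := h
  obtain ⟨a', b', c'⟩ := h'
  refine ⟨mul_nonneg a a', (norm_mul_le _ _).trans (by gcongr), ?_⟩
  have e : X * X' - Y * Y' = (X - Y) * X' + Y * (X' - Y') := by
    rw [sub_mul, mul_sub]; abel
  have hx : ‖X'‖ ≤ s' := by
    have : ‖X'‖ ≤ ‖X' - Y'‖ + ‖Y'‖ := by simpa using norm_add_le (X' - Y') Y'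
    linarith
  rw [e]
  have hs : 0 ≤ s - r := (norm_nonneg _).trans c
  calc _ ≤ ‖X - Y‖ * ‖X'‖ + ‖Y‖ * ‖X' - Y'‖ :=
        (norm_add_le _ _).trans (add_le_add (norm_mul_le _ _) (norm_mul_le _ _))
    _ ≤ (s - r) * s' + r * (s' - r') := by gcongr
    _ = _ := by ring

lemma PRel.one : PRel (1 : H →L[ℂ] H) 1 1 1 :=
  ⟨zero_le_one, ContinuousLinearMap.norm_id_le, by simp⟩

lemma PRel.pow {X Y : H →L[ℂ] H} {s r : ℝ} (h : PRel X Y s r) (j : ℕ) :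
    PRel (X ^ j) (Y ^ j) (s ^ j) (r ^ j) := by
  induction j with
  | zero => simpa using PRel.one
  | succ j ih => simp only [pow_succ]; exact ih.mul h

lemma PRel.list : ∀ {n : ℕ} {X Y : Fin n → (H →L[ℂ] H)} {s r : ℝ} (_ : ∀ i, PRel (X i) (Y i) s r)
    (p : Fin n → ℕ), PRel (List.ofFn fun i => X i ^ p i).prod (List.ofFn fun i => Y i ^ p i).prod
      (s ^ (∑ i, p i)) (r ^ (∑ i, p i))
  | 0, X, Y, s, r, h, p => by simpa using PRel.one
  | n+1, X, Y, s, r, h, p => by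
    simp only [List.ofFn_succ, List.prod_cons, Fin.sum_univ_succ, pow_add]
    exact ((h 0).pow _).mul (PRel.list (fun i => h i.succ) _)

lemma PRel.adj {X Y : H →L[ℂ] H} {s r : ℝ} (h : PRel X Y s r) : PRel (adjoint X) (adjoint Y) s r := by
  refine ⟨h.1, by rw [adj_norm]; exact h.2.1, ?_⟩
  rw [← map_sub, adj_norm]; exact h.2.2

lemma PRel.ent {n : ℕ} {X Y : Fin n → (H →L[ℂ] H)} {s r : ℝ} (h : ∀ i, PRel (X i) (Y i) s r)
    (α β : Fin n → ℕ) : PRel (ent X 1 α β) (ent Y 1 α β) (s ^ dd α β) (r ^ dd α β) := by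
  have : dd α β = ∑ i, (β i - α i) + ∑ i, (α i - β i) := by
    rw [dd, Finset.sum_add_distrib, add_comm]
  simp only [_root_.ent, mul_one, this, pow_add]
  exact (PRel.list h _).mul (PRel.list (fun i => (h i).adj) _)

lemma pow_diff (r s t : ℝ) (hr : 0 ≤ r) (hrs : r ≤ s) (hst : s < t) (d : ℕ) :
    s ^ d - r ^ d ≤ (s - r) / (t - s) * t ^ d := by
  have ht : 0 < t - s := by linarith
  have key : (s ^ d - r ^ d) * (t - s) ≤ (s - r) * t ^ d := by
    induction d with
    | zero => simp; linarith
    | succ d ih =>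
      have h1 : r ^ d ≤ t ^ d := by gcongr; linarith
      have h2 : 0 ≤ (s - r) * (t - s) := mul_nonneg (by linarith) ht.le
      have h3 := mul_le_mul_of_nonneg_left ih (hr.trans hrs)
      have h4 := mul_le_mul_of_nonneg_right h1 h2
      calc _ = s * ((s ^ d - r ^ d) * (t - s)) + r ^ d * ((s - r) * (t - s)) := by ring
        _ ≤ s * ((s - r) * t ^ d) + t ^ d * ((s - r) * (t - s)) := add_le_add h3 h4
        _ = _ := by ring
  rw [div_mul_eq_mul_div, le_div_iff₀ ht]
  exact key

/-- Scaled kernel. -/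
def rk {n : ℕ} (r : ℝ) (M : (Fin n → ℕ) → (Fin n → ℕ) → (H →L[ℂ] H)) :
    (Fin n → ℕ) → (Fin n → ℕ) → (H →L[ℂ] H) := fun α β => ((r ^ dd α β : ℝ) : ℂ) • M α β

lemma gf_smul {n : ℕ} (c : ℝ) (M : (Fin n → ℕ) → (Fin n → ℕ) → (H →L[ℂ] H)) (N : ℕ)
    (h : (Fin n → ℕ) → H) : gf (fun α β => (c : ℂ) • M α β) N h = c * gf M N h := by
  simp [gf, inner_smul_left, Finset.mul_sum]

lemma gf_sub {n : ℕ} (M M' : (Fin n → ℕ) → (Fin n → ℕ) → (H →L[ℂ] H)) (N : ℕ)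
    (h : (Fin n → ℕ) → H) : gf (fun α β => M α β - M' α β) N h = gf M N h - gf M' N h := by
  simp [gf, inner_sub_left, Finset.sum_sub_distrib]

lemma gram1 (r : ℝ) (hr0 : 0 ≤ r) (hr : r < 1) (N : ℕ) : ∃ (w : ℕ → ℝ) (v : ℕ → ℕ → ℝ),
    (∀ j, 0 ≤ w j) ∧ ∀ a ∈ Finset.range N, ∀ b ∈ Finset.range N,
      r ^ ((a - b) + (b - a)) = ∑ j ∈ Finset.range N, w j * (v a j * v b j) := by
  let w : ℕ → ℝ := fun j => if j = 0 then 1 else 1 - r ^ 2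
  let v : ℕ → ℕ → ℝ := fun a j => if j ≤ a then r ^ (a - j) else 0
  have base : ∀ a, ∑ j ∈ Finset.range (a+1), w j * (r ^ (a - j) * r ^ (a - j)) = 1 := by
    intro a
    induction a with
    | zero => simp [w]
    | succ a ih =>
      rw [Finset.sum_range_succ]
      have : ∑ j ∈ Finset.range (a+1), w j * (r ^ (a + 1 - j) * r ^ (a + 1 - j)) =
          r ^ 2 * ∑ j ∈ Finset.range (a+1), w j * (r ^ (a - j) * r ^ (a - j)) := by
        rw [Finset.mul_sum]
        apply Finset.sum_congr rfl
        intro j hj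
        have : a + 1 - j = (a - j) + 1 := by have := Finset.mem_range.1 hj; omega
        rw [this, pow_succ]; ring
      rw [this, ih]
      simp [w]
  have main : ∀ a b, a ≤ b → b < N → r ^ (b - a) =
      ∑ j ∈ Finset.range N, w j * (v a j * v b j) := by
    intro a b hab hb
    have h1 : ∑ j ∈ Finset.range N, w j * (v a j * v b j) =
        ∑ j ∈ Finset.range (a+1), w j * (v a j * v b j) := by
      symm
      apply Finset.sum_subset
      · intro j; simp; omega
      · intro j _ hj
        have : ¬ j ≤ a := by simp at hj; omega
        simp [v, this]
    rw [h1]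
    have h2 : ∑ j ∈ Finset.range (a+1), w j * (v a j * v b j) =
        r ^ (b - a) * ∑ j ∈ Finset.range (a+1), w j * (r ^ (a - j) * r ^ (a - j)) := by
      rw [Finset.mul_sum]
      apply Finset.sum_congr rfl
      intro j hj
      have hja : j ≤ a := by have := Finset.mem_range.1 hj; omega
      have e : b - j = (b - a) + (a - j) := by omega
      simp only [v, hja, hja.trans hab, if_true, e, pow_add]
      ring
    rw [h2, base, mul_one]
  refine ⟨w, v, ?_, ?_⟩
  · intro j
    simp only [w]
    split_ifs
    · norm_num
    · nlinarith
  · intro a ha b hb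
    rw [Finset.mem_range] at ha hb
    rcases le_total a b with h | h
    · have : (a - b) + (b - a) = b - a := by omega
      rw [this]; exact main a b h hb
    · have : (a - b) + (b - a) = a - b := by omega
      rw [this, main b a h ha]
      exact Finset.sum_congr rfl fun j _ => by ring

theorem schur_mult {n : ℕ} (M : (Fin n → ℕ) → (Fin n → ℕ) → (H →L[ℂ] H)) (N : ℕ)
    (hM : ∀ h, 0 ≤ (gf M N h).re) (r : ℝ) (hr0 : 0 ≤ r) (hr : r < 1) (h : (Fin n → ℕ) → H) :
    0 ≤ (gf (rk r M) N h).re := by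
  obtain ⟨w, v, hw, hv⟩ := gram1 r hr0 hr N
  have hd : ∀ α ∈ box n N, ∀ β ∈ box n N, r ^ dd α β =
      ∑ J ∈ box n N, (∏ i, w (J i)) * ((∏ i, v (α i) (J i)) * ∏ i, v (β i) (J i)) := by
    intro α hα β hβ
    simp only [box, Fintype.mem_piFinset] at hα hβ
    rw [dd, ← Finset.prod_pow_eq_pow_sum, box]
    rw [Finset.prod_congr rfl fun i _ => hv (α i) (hα i) (β i) (hβ i)]
    rw [Finset.prod_univ_sum]
    exact Finset.sum_congr rfl fun J _ => by rw [Finset.prod_mul_distrib, Finset.prod_mul_distrib]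
  have : gf (rk r M) N h = ∑ J ∈ box n N, ((∏ i, w (J i) : ℝ) : ℂ) *
      gf M N (fun α => ((∏ i, v (α i) (J i) : ℝ) : ℂ) • h α) := by
    simp only [gf, Finset.mul_sum]
    rw [Finset.sum_comm]
    conv_rhs => rw [Finset.sum_comm]
    rw [Finset.sum_comm]
    apply Finset.sum_congr rfl
    intro α hα
    rw [Finset.sum_comm]
    apply Finset.sum_congr rfl
    intro β hβ
    simp only [rk, _root_.smul_apply, map_smul, inner_smul_left, inner_smul_right,
      Complex.conj_ofReal]
    rw [hd α hα β hβ, Complex.ofReal_sum, Finset.sum_mul]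
    apply Finset.sum_congr rfl
    intro J _
    push_cast
    ring
  rw [this, Complex.re_sum]
  apply Finset.sum_nonneg
  intro J _
  rw [Complex.re_ofReal_mul]
  exact mul_nonneg (Finset.prod_nonneg fun i _ => hw _) (hM _)

/-! ### Part 4: connection with operators on `ℓ²` -/

def vec {n : ℕ} (N : ℕ) (h : (Fin n → ℕ) → H) : L2 n H :=
  ∑ α ∈ box n N, lp.single 2 α (h α)

lemma inner_vec {n : ℕ} {X : Fin n → (H →L[ℂ] H)} {r : ℝ} {P : L2 n H →L[ℂ] L2 n H}
    (hP : IsPoissonKernel X r P) (N : ℕ) (h : (Fin n → ℕ) → H) :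
    inner ℂ (P (vec N h)) (vec N h) = gf (rk r (ent X 1)) N h := by
  simp only [vec, map_sum, inner_sum, sum_inner, gf]
  apply Finset.sum_congr rfl
  intro α _
  apply Finset.sum_congr rfl
  intro β _
  rw [hP α β (h β) (h α)]
  simp only [rk, _root_.smul_apply, inner_smul_left, Complex.conj_ofReal, ent, mul_one, dd]

lemma norm_vec {n : ℕ} (N : ℕ) (h : (Fin n → ℕ) → H) : ‖vec N h‖ ^ 2 = nsq n N h := by
  have : (inner ℂ (vec N h) (vec N h) : ℂ) = ((nsq n N h : ℝ) : ℂ) := by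
    simp only [vec, inner_sum, sum_inner, nsq]
    push_cast
    apply Finset.sum_congr rfl
    intro α hα
    rw [Finset.sum_eq_single α]
    · rw [lp.inner_single_left, lp.single_apply_self, inner_self_eq_norm_sq_to_K]
      rfl
    · intro β _ hβ
      rw [lp.inner_single_left, lp.single_apply_ne _ _ _ hβ, inner_zero_right]
    · intro h'; exact absurd hα h'
  rw [← inner_self_eq_norm_sq (𝕜 := ℂ), this]
  simp

lemma vec_tendsto {n : ℕ} (x : L2 n H) :
    Filter.Tendsto (fun N => vec N (fun α => x α)) Filter.atTop (nhds x) := by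
  have h1 := lp.hasSum_single (p := 2) (by norm_num) x
  have h2 : Filter.Tendsto (fun N => box n N) Filter.atTop Filter.atTop := by
    apply Filter.tendsto_atTop_finset_of_monotone
    · intro a b hab α
      simp only [box, Fintype.mem_piFinset, Finset.mem_range]
      exact fun h i => (h i).trans_le hab
    · intro α
      refine ⟨(∑ i, α i) + 1, ?_⟩
      simp only [box, Fintype.mem_piFinset, Finset.mem_range]
      intro i
      have := Finset.single_le_sum (f := α) (fun i _ => Nat.zero_le _) (Finset.mem_univ i)
      omega
  exact h1.comp h2

lemma inner_tendsto {n : ℕ} (S : L2 n H →L[ℂ] L2 n H) (x : L2 n H) :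
    Filter.Tendsto (fun N => (inner ℂ (S (vec N (fun α => x α))) (vec N (fun α => x α)) : ℂ))
      Filter.atTop (nhds (inner ℂ (S x) x)) :=
  ((S.continuous.tendsto x).comp (vec_tendsto x)).inner (vec_tendsto x)

lemma im_of_vec {n : ℕ} (S : L2 n H →L[ℂ] L2 n H)
    (h : ∀ N (h : (Fin n → ℕ) → H), (inner ℂ (S (vec N h)) (vec N h) : ℂ).im = 0) (x : L2 n H) :
    (inner ℂ (S x) x : ℂ).im = 0 := by
  have h1 := (Complex.continuous_im.tendsto _).comp (inner_tendsto S x)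
  refine tendsto_nhds_unique h1 ?_
  simp only [Function.comp_def, h]
  exact tendsto_const_nhds

lemma re_of_vec {n : ℕ} (S : L2 n H →L[ℂ] L2 n H)
    (h : ∀ N (h : (Fin n → ℕ) → H), 0 ≤ (inner ℂ (S (vec N h)) (vec N h) : ℂ).re) (x : L2 n H) :
    0 ≤ (inner ℂ (S x) x : ℂ).re := by
  have h1 := (Complex.continuous_re.tendsto _).comp (inner_tendsto S x)
  exact ge_of_tendsto' h1 fun N => h N _

lemma pos_of_vec {n : ℕ} (S : L2 n H →L[ℂ] L2 n H)
    (h : ∀ N (h : (Fin n → ℕ) → H), (inner ℂ (S (vec N h)) (vec N h) : ℂ).im = 0)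
    (h' : ∀ N (h : (Fin n → ℕ) → H), 0 ≤ (inner ℂ (S (vec N h)) (vec N h) : ℂ).re) :
    S.IsPositive := by
  rw [isPositive_iff_complex]
  intro x
  refine ⟨?_, re_of_vec S h' x⟩
  apply Complex.ext
  · simp
  · simp [im_of_vec S h x]

lemma norm_of_vec {n : ℕ} (S : L2 n H →L[ℂ] L2 n H) (η : ℝ) (hη : 0 ≤ η)
    (h : ∀ N (h : (Fin n → ℕ) → H), (inner ℂ (S (vec N h)) (vec N h) : ℂ).im = 0)
    (h' : ∀ N (h : (Fin n → ℕ) → H), ‖(inner ℂ (S (vec N h)) (vec N h) : ℂ)‖ ≤ η * ‖vec N h‖ ^ 2) :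
    ‖S‖ ≤ η := by
  have hs : S.IsSymmetric := by
    rw [LinearMap.isSymmetric_iff_inner_map_self_real]
    intro x
    rw [Complex.conj_eq_iff_im]
    exact im_of_vec S h x
  have hb : ∀ x, ‖(inner ℂ (S x) x : ℂ)‖ ≤ η * ‖x‖ ^ 2 := by
    intro x
    have h1 := (inner_tendsto S x).norm
    have h2 := (((vec_tendsto x).norm).pow 2).const_mul η
    exact le_of_tendsto_of_tendsto' h1 h2 fun N => h' N _
  rw [norm_eq_iSup_rayleighQuotient S hs]
  apply ciSup_le
  intro x
  rw [rayleighQuotient, abs_div, abs_of_nonneg (sq_nonneg ‖x‖)]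
  refine div_le_of_le_mul₀ (by positivity) hη ?_
  refine le_trans ?_ (hb x)
  exact Complex.abs_re_le_norm _

lemma list_adj : ∀ {n : ℕ} (X : Fin n → (H →L[ℂ] H)) (_ : ∀ i j, Commute (X i) (X j))
    (p : Fin n → ℕ), adjoint (List.ofFn fun i => X i ^ p i).prod =
      (List.ofFn fun i => adjoint (X i) ^ p i).prod
  | 0, X, hX, p => by simp [← star_eq_adjoint]
  | n+1, X, hX, p => by
    have ih := list_adj (fun i => X i.succ) (fun i j => hX _ _) (fun i => p i.succ)
    have hc := commute_list (fun i => adjoint (X i.succ)) (adjoint (X 0) ^ p 0)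
      (fun i => (commute_adj (hX 0 i.succ)).pow_left _) (fun i => p i.succ)
    simp only [List.ofFn_succ, List.prod_cons]
    rw [hc.eq, ← ih, ← star_eq_adjoint, ← star_eq_adjoint, ← star_eq_adjoint, star_mul, star_pow]

lemma ent_adj {n : ℕ} (X : Fin n → (H →L[ℂ] H)) (hX : ∀ i j, Commute (X i) (X j))
    (α β : Fin n → ℕ) : adjoint (ent X 1 α β) = ent X 1 β α := by
  simp only [ent, mul_one]
  rw [← list_adj X hX, ← list_adj X hX, ← star_eq_adjoint, ← star_eq_adjoint, ← star_eq_adjoint,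
    star_mul, star_star]

lemma gf_im {n : ℕ} (M : (Fin n → ℕ) → (Fin n → ℕ) → (H →L[ℂ] H))
    (hM : ∀ α β, adjoint (M α β) = M β α) (N : ℕ) (h : (Fin n → ℕ) → H) : (gf M N h).im = 0 := by
  rw [← Complex.conj_eq_iff_im]
  simp only [gf, map_sum, inner_conj_symm]
  rw [Finset.sum_comm]
  apply Finset.sum_congr rfl
  intro α _
  apply Finset.sum_congr rfl
  intro β _
  rw [← hM β α, adjoint_inner_left]

lemma rk_adj {n : ℕ} (X : Fin n → (H →L[ℂ] H)) (hX : ∀ i j, Commute (X i) (X j)) (r : ℝ)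
    (α β : Fin n → ℕ) : adjoint (rk r (ent X 1) α β) = rk r (ent X 1) β α := by
  simp only [rk]
  rw [← star_eq_adjoint, star_smul, star_eq_adjoint, ent_adj X hX, dd_comm β α]
  simp

lemma rk_im {n : ℕ} (X : Fin n → (H →L[ℂ] H)) (hX : ∀ i j, Commute (X i) (X j)) (r : ℝ)
    (N : ℕ) (h : (Fin n → ℕ) → H) : (gf (rk r (ent X 1)) N h).im = 0 :=
  gf_im _ (rk_adj X hX r) N h

def QQ {n : ℕ} (X : Fin n → (H →L[ℂ] H)) (N : ℕ) (h : (Fin n → ℕ) → H) : ℝ :=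
  (gf (ent X 1) N h).re

lemma rk_tendsto {n : ℕ} (M : (Fin n → ℕ) → (Fin n → ℕ) → (H →L[ℂ] H)) (N : ℕ)
    (h : (Fin n → ℕ) → H) :
    Filter.Tendsto (fun r => (gf (rk r M) N h).re) (nhdsWithin 1 (Set.Iio 1))
      (nhds (gf M N h).re) := by
  have hc : Continuous (fun r => (gf (rk r M) N h).re) := by
    simp only [gf, rk, _root_.smul_apply, inner_smul_left, Complex.conj_ofReal]
    fun_prop
  have h1 : gf (rk 1 M) N h = gf M N h := by
    simp [gf, rk]
  rw [← h1]
  exact (hc.tendsto 1).mono_left nhdsWithin_le_nhds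

theorem pos_iff {n : ℕ} {A B : Fin n → (H →L[ℂ] H)} (hA : ∀ i j, Commute (A i) (A j))
    (hB : ∀ i j, Commute (B i) (B j)) {PA PB : ℝ → (L2 n H →L[ℂ] L2 n H)}
    (hPA : ∀ r ∈ Set.Ico (0 : ℝ) 1, IsPoissonKernel A r (PA r))
    (hPB : ∀ r ∈ Set.Ico (0 : ℝ) 1, IsPoissonKernel B r (PB r)) (p q : ℝ) :
    (∀ r ∈ Set.Ico (0 : ℝ) 1, ((p : ℂ) • PA r - (q : ℂ) • PB r).IsPositive) ↔
      ∀ N h, q * QQ B N h ≤ p * QQ A N h := by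
  have hin : ∀ r ∈ Set.Ico (0 : ℝ) 1, ∀ N h,
      inner ℂ (((p : ℂ) • PA r - (q : ℂ) • PB r) (vec N h)) (vec N h) =
        p * gf (rk r (ent A 1)) N h - q * gf (rk r (ent B 1)) N h := by
    intro r hr N h
    rw [← inner_vec (hPA r hr), ← inner_vec (hPB r hr)]
    rw [_root_.sub_apply, _root_.smul_apply, _root_.smul_apply, inner_sub_left, inner_smul_left,
      inner_smul_left, Complex.conj_ofReal, Complex.conj_ofReal]
  constructor
  · intro H1 N h
    have h1 := (rk_tendsto (ent A 1) N h).const_mul p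
    have h2 := (rk_tendsto (ent B 1) N h).const_mul q
    refine le_of_tendsto_of_tendsto h2 h1 ?_
    have : Set.Ico (0:ℝ) 1 ∈ nhdsWithin (1:ℝ) (Set.Iio 1) := Ico_mem_nhdsLT (by norm_num)
    filter_upwards [this] with r hr
    have h3 := (H1 r hr).re_inner_nonneg_left (vec N h)
    rw [hin r hr] at h3
    simp only [RCLike.re_to_complex, Complex.sub_re, Complex.re_ofReal_mul] at h3
    linarith
  · intro H1 r hr
    apply pos_of_vec
    · intro N h
      rw [hin r hr, Complex.sub_im, Complex.im_ofReal_mul, Complex.im_ofReal_mul, rk_im A hA,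
        rk_im B hB]
      simp
    · intro N h
      rw [hin r hr]
      have := schur_mult (fun α β => ((p:ℂ) • ent A 1 α β) - ((q : ℂ) • ent B 1 α β)) N (by
        intro h
        rw [gf_sub (fun α β => ((p:ℂ) • ent A 1 α β)) (fun α β => ((q:ℂ) • ent B 1 α β)),
          gf_smul, gf_smul, Complex.sub_re, Complex.re_ofReal_mul, Complex.re_ofReal_mul]
        have := H1 N h
        unfold QQ at this
        linarith) r hr.1 hr.2 h
      convert this using 2
      rw [← gf_smul, ← gf_smul, ← gf_sub]
      congr 1
      funext α β
      simp only [rk, smul_sub, smul_smul]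
      congr 2 <;> ring

theorem sandwich_iff_s16 {n : ℕ} {A B : Fin n → (H →L[ℂ] H)} (hA : ∀ i j, Commute (A i) (A j))
    (hB : ∀ i j, Commute (B i) (B j)) {PA PB : ℝ → (L2 n H →L[ℂ] L2 n H)}
    (hPA : ∀ r ∈ Set.Ico (0 : ℝ) 1, IsPoissonKernel A r (PA r))
    (hPB : ∀ r ∈ Set.Ico (0 : ℝ) 1, IsPoissonKernel B r (PB r)) (c : ℝ) :
    PoissonSandwich PA PB c ↔
      ∀ N h, (c ^ 2)⁻¹ * QQ B N h ≤ QQ A N h ∧ QQ A N h ≤ c ^ 2 * QQ B N h := by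
  have h1 := pos_iff hA hB hPA hPB 1 ((c ^ 2)⁻¹)
  have h2 := pos_iff hB hA hPB hPA (c ^ 2) 1
  simp only [Complex.ofReal_one, one_smul, one_mul, Complex.ofReal_inv, Complex.ofReal_pow] at h1 h2
  constructor
  · intro hs N h
    exact ⟨h1.1 (fun r hr => (hs r hr).1) N h, h2.1 (fun r hr => (hs r hr).2) N h⟩
  · intro hs r hr
    exact ⟨h1.2 (fun N h => (hs N h).1) r hr, h2.2 (fun N h => (hs N h).2) r hr⟩

/-! ### Part 5: estimates -/

lemma coercive {n : ℕ} {X : Fin n → (H →L[ℂ] H)} (hX : memPolydisk X) :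
    ∃ ε : ℝ, 0 < ε ∧ ∀ x, ε * ‖x‖ ^ 2 ≤ (inner ℂ (dfct X 1 x) x).re := by
  obtain ⟨_, _, h3, h4⟩ := hX
  rcases subsingleton_or_nontrivial H with hs | hs
  · refine ⟨1, one_pos, fun x => ?_⟩
    rw [Subsingleton.elim x 0]; simp
  · have h0 : 0 ≤ defect X := (nonneg_iff_isPositive _).2 h3
    have hsp := h4.isStrictlyPositive h0
    have := (CFC.exists_pos_algebraMap_le_iff (a := defect X) h3.isSelfAdjoint).2
      (fun x hx => hsp.spectrum_pos hx)
    obtain ⟨r, hr, hle⟩ := this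
    refine ⟨r, hr, fun x => ?_⟩
    rw [ContinuousLinearMap.le_def] at hle
    have h5 := hle.re_inner_nonneg_left x
    rw [_root_.sub_apply, inner_sub_left, Algebra.algebraMap_eq_smul_one] at h5
    have h6 : (inner ℂ ((r • (1 : H →L[ℂ] H)) x) x : ℂ) = ((r * ‖x‖ ^ 2 : ℝ) : ℂ) := by
      change (inner ℂ (r • x) x : ℂ) = _
      rw [inner_smul_left_eq_smul, inner_self_eq_norm_sq_to_K]
      simp
    rw [h6] at h5
    simp only [map_sub, RCLike.re_to_complex, Complex.ofReal_re] at h5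
    change r * ‖x‖ ^ 2 ≤ (inner ℂ (defect X x) x).re
    linarith

lemma form_lower {n : ℕ} {X : Fin n → (H →L[ℂ] H)} (hX : memPolydisk X) :
    ∃ ε : ℝ, 0 < ε ∧ ∀ N h, ε * nsq n N h ≤ QQ X N h := by
  obtain ⟨ε, h1, h2⟩ := coercive hX
  exact ⟨ε / 4 ^ n, by positivity, fun N h => lower_bound X hX.1 hX.2.1 1 ε h1.le h2 N h⟩

lemma exists_t {n : ℕ} (X : Fin n → (H →L[ℂ] H)) (hX : ∀ i, ‖X i‖ < 1) :
    ∃ t : ℝ, 0 ≤ t ∧ t < 1 ∧ ∀ i, ‖X i‖ ≤ t := by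
  refine ⟨((Finset.univ.sup fun i => ‖X i‖₊ : NNReal) : ℝ), NNReal.coe_nonneg _, ?_, fun i => ?_⟩
  · rw [← NNReal.coe_one, NNReal.coe_lt_coe, Finset.sup_lt_iff (by simp)]
    intro i _
    exact hX i
  · rw [← coe_nnnorm, NNReal.coe_le_coe]
    exact Finset.le_sup (f := fun i => ‖X i‖₊) (Finset.mem_univ i)

lemma form_upper {n : ℕ} {X : Fin n → (H →L[ℂ] H)} (hX : ∀ i, ‖X i‖ < 1) :
    ∃ C : ℝ, 0 < C ∧ ∀ N h, QQ X N h ≤ C * nsq n N h := by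
  obtain ⟨t, h0, h1, h2⟩ := exists_t X hX
  have h1t : 0 < 1 - t := by linarith
  refine ⟨1 * (2 / (1 - t)) ^ n, by positivity, fun N h => ?_⟩
  refine (Complex.re_le_norm _).trans (schur_bound _ 1 t zero_le_one h0 h1 ?_ N h)
  intro α β
  have := (PRel.ent (X := X) (Y := X) (s := t) (r := t)
    (fun i => ⟨h0, h2 i, by simp⟩) α β).2.1
  linarith

lemma perturb {n : ℕ} {T : Fin n → (H →L[ℂ] H)} (hT : ∀ i, ‖T i‖ < 1) :
    ∃ C δ₀ : ℝ, 0 < C ∧ 0 < δ₀ ∧ ∀ δ, 0 ≤ δ → δ ≤ δ₀ → ∀ A : Fin n → (H →L[ℂ] H),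
      (∀ i, ‖A i - T i‖ ≤ δ) → ∀ ρ, 0 ≤ ρ → ρ ≤ 1 → ∀ N h,
      ‖gf (rk ρ (ent A 1)) N h - gf (rk ρ (ent T 1)) N h‖ ≤ C * δ * nsq n N h := by
  obtain ⟨r, h0, h1, h2⟩ := exists_t T hT
  have h1r : 0 < 1 - r := by linarith
  refine ⟨4 / (1 - r) * (2 / (1 - (1 + r) / 2)) ^ n, (1 - r) / 4, ?_, by positivity, ?_⟩
  · have : 0 < 1 - (1 + r) / 2 := by linarith
    positivity
  intro δ hδ hδ0 A hA ρ hρ0 hρ1 N h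
  rw [← gf_sub]
  have := schur_bound (fun α β => rk ρ (ent A 1) α β - rk ρ (ent T 1) α β) (4 / (1 - r) * δ)
    ((1 + r) / 2) (by positivity) (by linarith) (by linarith) ?_ N h
  · refine this.trans (le_of_eq ?_); ring
  intro α β
  have h3 := (PRel.ent (X := A) (Y := T) (s := r + δ) (r := r)
    (fun i => ⟨h0, h2 i, by simpa using hA i⟩) α β).2.2
  have h4 := pow_diff r (r + δ) ((1 + r) / 2) h0 (by linarith) (by linarith) (dd α β)
  simp only [rk]
  rw [← smul_sub, norm_smul, Complex.norm_real, Real.norm_of_nonneg (by positivity)]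
  have h5 : ρ ^ dd α β ≤ 1 := pow_le_one₀ hρ0 hρ1
  have h6 : (r + δ - r) / ((1 + r) / 2 - (r + δ)) ≤ 4 / (1 - r) * δ := by
    rw [div_le_iff₀ (by linarith), div_mul_eq_mul_div, div_mul_eq_mul_div, le_div_iff₀ h1r]
    nlinarith
  calc _ ≤ 1 * ‖ent A 1 α β - ent T 1 α β‖ := by gcongr
    _ ≤ (r + δ - r) / ((1 + r) / 2 - (r + δ)) * ((1 + r) / 2) ^ dd α β := by linarith
    _ ≤ _ := by gcongr

lemma rk_one {n : ℕ} (M : (Fin n → ℕ) → (Fin n → ℕ) → (H →L[ℂ] H)) : rk 1 M = M := by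
  funext α β; simp [rk]

lemma deltaP_lt {n : ℕ} {PA PB : ℝ → (L2 n H →L[ℂ] L2 n H)} {c ε : ℝ} (hc : 1 ≤ c)
    (hs : PoissonSandwich PA PB c) (hε : c < Real.exp ε) : deltaP PA PB < ε := by
  have hb : BddBelow {c : ℝ | 1 ≤ c ∧ PoissonSandwich PA PB c} := ⟨1, fun x hx => hx.1⟩
  have h1 : sInf {c : ℝ | 1 ≤ c ∧ PoissonSandwich PA PB c} ≤ c := csInf_le hb ⟨hc, hs⟩
  have h2 : 1 ≤ sInf {c : ℝ | 1 ≤ c ∧ PoissonSandwich PA PB c} :=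
    le_csInf ⟨c, hc, hs⟩ fun x hx => hx.1
  rw [deltaP, Real.log_lt_iff_lt_exp (by linarith)]
  linarith

lemma exists_of_deltaP_lt {n : ℕ} {PA PB : ℝ → (L2 n H →L[ℂ] L2 n H)} {ε : ℝ}
    (hne : ∃ c : ℝ, 1 ≤ c ∧ PoissonSandwich PA PB c) (hε : deltaP PA PB < ε) :
    ∃ c, 1 ≤ c ∧ c < Real.exp ε ∧ PoissonSandwich PA PB c := by
  obtain ⟨c, hc⟩ := hne
  have h2 : 1 ≤ sInf {c : ℝ | 1 ≤ c ∧ PoissonSandwich PA PB c} :=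
    le_csInf ⟨c, hc⟩ fun x hx => hx.1
  rw [deltaP, Real.log_lt_iff_lt_exp (by linarith)] at hε
  obtain ⟨d, hd, hd'⟩ := exists_lt_of_csInf_lt ⟨c, hc⟩ hε
  exact ⟨d, hd.1, hd', hd.2⟩

lemma sandwich_nonempty {n : ℕ} {A B : Fin n → (H →L[ℂ] H)} (hA : memPolydisk A)
    (hB : memPolydisk B) {PA PB : ℝ → (L2 n H →L[ℂ] L2 n H)}
    (hPA : ∀ r ∈ Set.Ico (0 : ℝ) 1, IsPoissonKernel A r (PA r))
    (hPB : ∀ r ∈ Set.Ico (0 : ℝ) 1, IsPoissonKernel B r (PB r)) :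
    ∃ c : ℝ, 1 ≤ c ∧ PoissonSandwich PA PB c := by
  obtain ⟨eA, hA0, hA1⟩ := form_lower hA
  obtain ⟨eB, hB0, hB1⟩ := form_lower hB
  obtain ⟨cA, hA2, hA3⟩ := form_upper hA.2.1
  obtain ⟨cB, hB2, hB3⟩ := form_upper hB.2.1
  have p1 : 0 < cA / eB := by positivity
  have p2 : 0 < cB / eA := by positivity
  refine ⟨1 + cA / eB + cB / eA, by linarith, ?_⟩
  rw [sandwich_iff_s16 hA.1 hB.1 hPA hPB]
  set c := 1 + cA / eB + cB / eA with hc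
  have hc1 : cA / eB ≤ c ^ 2 := by nlinarith
  have hc2 : cB / eA ≤ c ^ 2 := by nlinarith
  rw [div_le_iff₀ hB0] at hc1
  rw [div_le_iff₀ hA0] at hc2
  have hcp : 0 < c ^ 2 := by positivity
  intro N h
  have hn := nsq_nonneg n N h
  constructor
  · rw [inv_mul_le_iff₀ hcp]
    calc _ ≤ cB * nsq n N h := hB3 N h
      _ ≤ c ^ 2 * eA * nsq n N h := by gcongr
      _ = c ^ 2 * (eA * nsq n N h) := by ring
      _ ≤ _ := by gcongr; exact hA1 N h
  · calc _ ≤ cA * nsq n N h := hA3 N h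
      _ ≤ c ^ 2 * eB * nsq n N h := by gcongr
      _ = c ^ 2 * (eB * nsq n N h) := by ring
      _ ≤ _ := by gcongr; exact hB1 N h

lemma list_single : ∀ {n : ℕ} (X : Fin n → (H →L[ℂ] H)) (i : Fin n),
    (List.ofFn fun j => X j ^ (Pi.single i 1 : Fin n → ℕ) j).prod = X i := by
  intro n
  induction n with
  | zero => intro X i; exact i.elim0
  | succ n ih =>
    intro X i
    rw [List.ofFn_succ, List.prod_cons]
    refine Fin.cases ?_ (fun j => ?_) i
    · have : (fun j : Fin n => X j.succ ^ (Pi.single (0 : Fin (n+1)) 1 : Fin (n+1) → ℕ) j.succ) =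
          fun _ => 1 := by
        funext j; simp [Pi.single_apply]
      rw [this]; simp
    · have := ih (fun j => X j.succ) j
      have h2 : (fun l : Fin n => X l.succ ^ (Pi.single j.succ 1 : Fin (n+1) → ℕ) l.succ) =
          fun l => X l.succ ^ (Pi.single j 1 : Fin n → ℕ) l := by
        funext l; simp [Pi.single_apply]
      rw [h2, this]
      simp [Pi.single_apply, (Fin.succ_ne_zero _).symm]

lemma QQ_two {n : ℕ} (i : Fin n) (x y : H) : ∃ h : (Fin n → ℕ) → H,
    nsq n 2 h = ‖x‖ ^ 2 + ‖y‖ ^ 2 ∧ ∀ X : Fin n → (H →L[ℂ] H),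
      QQ X 2 h = ‖x‖ ^ 2 + ‖y‖ ^ 2 + 2 * (inner ℂ (X i y) x).re := by
  classical
  let e : Fin n → ℕ := Pi.single i 1
  have he : e ≠ 0 := by intro h; simpa [e] using congrFun h i
  have hsub : ({0, e} : Finset (Fin n → ℕ)) ⊆ box n 2 := by
    intro α hα
    simp only [Finset.mem_insert, Finset.mem_singleton] at hα
    simp only [box, Fintype.mem_piFinset, Finset.mem_range]
    intro j
    rcases hα with rfl | rfl
    · simp
    · simp only [e, Pi.single_apply]; split_ifs <;> simp
  let h : (Fin n → ℕ) → H := fun α => if α = 0 then x else if α = e then y else 0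
  have h0 : h 0 = x := by simp [h]
  have h1 : h e = y := by simp [h, he]
  have h2 : ∀ α, α ∉ ({0, e} : Finset (Fin n → ℕ)) → h α = 0 := by
    intro α hα
    simp only [Finset.mem_insert, Finset.mem_singleton, not_or] at hα
    simp [h, hα]
  refine ⟨h, ?_, fun X => ?_⟩
  · rw [nsq, ← Finset.sum_subset hsub, Finset.sum_pair he.symm, h0, h1]
    intro α _ hα
    rw [h2 α hα]; simp
  · have hg : gf (ent X 1) 2 h = inner ℂ x x + inner ℂ (X i y) x +
        (inner ℂ (adjoint (X i) x) y + inner ℂ y y) := by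
      have hl := list_single X i
      have hl2 := list_single (fun j => adjoint (X j)) i
      rw [gf, ← Finset.sum_subset hsub, Finset.sum_pair he.symm]
      · rw [← Finset.sum_subset hsub, ← Finset.sum_subset hsub, Finset.sum_pair he.symm,
          Finset.sum_pair he.symm, h0, h1]
        · simp [ent, e, hl, hl2]
        · intro α _ hα; rw [h2 α hα]; simp
        · intro α _ hα; rw [h2 α hα]; simp
      · intro α _ hα; apply Finset.sum_eq_zero; intro β _; rw [h2 α hα]; simp
    rw [QQ, hg, adjoint_inner_left, ← inner_conj_symm x (X i y)]
    have := inner_self_eq_norm_sq (𝕜 := ℂ) x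
    have := inner_self_eq_norm_sq (𝕜 := ℂ) y
    simp only [Complex.add_re, Complex.conj_re, RCLike.re_to_complex] at *
    linarith

/-! ### Part 6: comparison of the topologies -/

lemma close {n : ℕ} {A T : Fin n → (H →L[ℂ] H)} (hT : ∀ i, ‖T i‖ ≤ 1) {c : ℝ} (hc : 1 ≤ c)
    (hs : ∀ N h, QQ A N h ≤ c ^ 2 * QQ T N h) (i : Fin n) : ‖A i - T i‖ ≤ 2 * (c ^ 2 - 1) := by
  have hc2 : 0 ≤ c ^ 2 - 1 := by nlinarith
  apply ContinuousLinearMap.opNorm_le_of_re_inner_le (𝕜 := ℂ) (by positivity)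
  intro y x hy hx
  obtain ⟨h, _, h2⟩ := QQ_two i x y
  have h3 := hs 2 h
  have h4 : (inner ℂ (T i y) x).re ≤ 1 := by
    refine (Complex.re_le_norm _).trans ((norm_inner_le_norm _ _).trans ?_)
    rw [hx, mul_one]
    refine ((T i).le_opNorm y).trans ?_
    rw [hy, mul_one]; exact hT i
  rw [h2 A, h2 T, hx, hy] at h3
  rw [_root_.sub_apply, inner_sub_left]
  simp only [map_sub, RCLike.re_to_complex]
  nlinarith

lemma delta_to_norm (ε : ℝ) (hε : 0 < ε) : ∃ δ : ℝ, 0 < δ ∧ ∀ {n : ℕ}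
    {A B : Fin n → (H →L[ℂ] H)} (_ : memPolydisk A)
    (_ : memPolydisk B) {PA PB : ℝ → (L2 n H →L[ℂ] L2 n H)}
    (_ : ∀ r ∈ Set.Ico (0 : ℝ) 1, IsPoissonKernel A r (PA r))
    (_ : ∀ r ∈ Set.Ico (0 : ℝ) 1, IsPoissonKernel B r (PB r)),
    deltaP PA PB < δ → ∀ i, ‖A i - B i‖ < ε := by
  refine ⟨Real.log (1 + ε / 2) / 2, div_pos (Real.log_pos (by linarith)) two_pos, ?_⟩
  intro n A B hA hB PA PB hPA hPB hd i
  obtain ⟨c, h1, h2, h3⟩ := exists_of_deltaP_lt (sandwich_nonempty hA hB hPA hPB) hd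
  rw [sandwich_iff_s16 hA.1 hB.1 hPA hPB] at h3
  have h4 := close (fun i => (hB.2.1 i).le) h1 (fun N h => (h3 N h).2) i
  have h5 : c ^ 2 < 1 + ε / 2 := by
    calc c ^ 2 < (Real.exp (Real.log (1 + ε / 2) / 2)) ^ 2 := by gcongr
      _ = 1 + ε / 2 := by
        rw [← Real.exp_nat_mul]
        push_cast
        rw [mul_div_cancel₀ _ two_ne_zero, Real.exp_log (by linarith)]
  linarith

lemma norm_to_delta {n : ℕ} {T : Fin n → (H →L[ℂ] H)} (hT : memPolydisk T)
    {PT : ℝ → (L2 n H →L[ℂ] L2 n H)}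
    (hPT : ∀ r ∈ Set.Ico (0 : ℝ) 1, IsPoissonKernel T r (PT r)) (ε : ℝ) (hε : 0 < ε) :
    ∃ δ : ℝ, 0 < δ ∧ ∀ {A : Fin n → (H →L[ℂ] H)} (_ : memPolydisk A)
    {PA : ℝ → (L2 n H →L[ℂ] L2 n H)}
    (_ : ∀ r ∈ Set.Ico (0 : ℝ) 1, IsPoissonKernel A r (PA r)),
    (∀ i, ‖A i - T i‖ ≤ δ) → deltaP PA PT < ε := by
  obtain ⟨e, he, hl⟩ := form_lower hT
  obtain ⟨C, δ₀, hC, hδ₀, hp⟩ := perturb hT.2.1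
  have hθ : 0 < 1 - Real.exp (-ε) := by
    have : Real.exp (-ε) < 1 := by
      rw [← Real.exp_zero]; exact Real.exp_lt_exp.2 (by linarith)
    linarith
  have hsum : 2 ≤ Real.exp ε + Real.exp (-ε) := by
    have h1 := Real.exp_pos ε
    have h2 := Real.exp_pos (-ε)
    have h3 : Real.exp ε * Real.exp (-ε) = 1 := by rw [← Real.exp_add]; simp
    nlinarith [sq_nonneg (Real.exp ε - Real.exp (-ε))]
  refine ⟨min δ₀ ((1 - Real.exp (-ε)) * e / C), by positivity, ?_⟩
  intro A hA PA hPA hAT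
  set δ := min δ₀ ((1 - Real.exp (-ε)) * e / C) with hδ
  have hδp : 0 < δ := by positivity
  have hδ1 : C * δ ≤ (1 - Real.exp (-ε)) * e := by
    have := min_le_right δ₀ ((1 - Real.exp (-ε)) * e / C)
    rw [← hδ, le_div_iff₀ hC] at this
    linarith
  refine deltaP_lt (c := Real.exp (ε / 2)) (Real.one_le_exp (by positivity)) ?_
    (Real.exp_lt_exp.2 (by linarith))
  rw [sandwich_iff_s16 hA.1 hT.1 hPA hPT]
  have hc2 : Real.exp (ε / 2) ^ 2 = Real.exp ε := by
    rw [← Real.exp_nat_mul]; congr 1; push_cast; ring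
  rw [hc2, ← Real.exp_neg]
  intro N h
  have h1 := hp δ hδp.le (min_le_left _ _) A hAT 1 zero_le_one le_rfl N h
  rw [rk_one, rk_one] at h1
  have h2 := (Complex.abs_re_le_norm _).trans h1
  rw [Complex.sub_re] at h2
  change |QQ A N h - QQ T N h| ≤ _ at h2
  have hn := nsq_nonneg n N h
  have h3 : C * δ * nsq n N h ≤ (1 - Real.exp (-ε)) * QQ T N h := by
    calc _ ≤ (1 - Real.exp (-ε)) * e * nsq n N h := by gcongr
      _ = (1 - Real.exp (-ε)) * (e * nsq n N h) := by ring
      _ ≤ _ := by gcongr; exact hl N h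
  have hQ : 0 ≤ QQ T N h := le_trans (by positivity) (hl N h)
  obtain ⟨h4, h5⟩ := abs_le.1 (h2.trans h3)
  constructor
  · linarith
  · nlinarith

lemma mem_of_forms {n : ℕ} {T : Fin n → (H →L[ℂ] H)} (hT : ∀ i j, Commute (T i) (T j))
    {ε : ℝ} (hε : 0 < ε) (hl : ∀ N h, ε * nsq n N h ≤ QQ T N h) : memPolydisk T := by
  refine ⟨hT, fun i => ?_, ?_⟩
  · have hq : 0 < Real.sqrt (1 + ε) := Real.sqrt_pos.2 (by linarith)
    have h1 : ‖T i‖ ≤ 1 / Real.sqrt (1 + ε) := by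
      apply ContinuousLinearMap.opNorm_le_bound _ (by positivity)
      intro y
      obtain ⟨h, h1, h2⟩ := QQ_two i (-(T i y)) y
      have h3 := hl 2 h
      have h5 := inner_self_eq_norm_sq (𝕜 := ℂ) (T i y)
      rw [h1, h2 T, norm_neg, inner_neg_right, Complex.neg_re] at h3
      simp only [RCLike.re_to_complex] at h5
      rw [h5] at h3
      rw [div_mul_eq_mul_div, one_mul, le_div_iff₀ hq]
      rw [← pow_le_pow_iff_left₀ (by positivity) (norm_nonneg _) two_ne_zero]
      rw [mul_pow, Real.sq_sqrt (by linarith)]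
      nlinarith [sq_nonneg ‖y‖]
    refine h1.trans_lt ?_
    rw [div_lt_one hq]
    rw [Real.lt_sqrt (by norm_num)]
    linarith
  · have key : ∀ x, (inner ℂ (defect T x) x).im = 0 ∧
        ε * ‖x‖ ^ 2 ≤ (inner ℂ (defect T x) x).re := by
      intro x
      obtain ⟨h, h0, h1⟩ := defect_test T hT 1 x
      change _ = inner ℂ (defect T x) x at h1
      rw [← h1, fm_eq_gf]
      refine ⟨gf_im _ (ent_adj T hT) 2 h, ?_⟩
      refine le_trans ?_ (hl 2 h)
      have : ‖x‖ ^ 2 ≤ nsq n 2 h := by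
        rw [← h0]
        refine Finset.single_le_sum (f := fun α => ‖h α‖ ^ 2) (fun α _ => by positivity) ?_
        simp [box]
      gcongr
    have hpos : ∀ S : H →L[ℂ] H, (∀ x, (inner ℂ (S x) x).im = 0 ∧ 0 ≤ (inner ℂ (S x) x).re) →
        S.IsPositive := by
      intro S hS
      rw [isPositive_iff_complex]
      intro x
      refine ⟨?_, (hS x).2⟩
      apply Complex.ext
      · simp
      · simp [(hS x).1]
    refine ⟨hpos _ fun x => ⟨(key x).1, le_trans (by positivity) (key x).2⟩, ?_⟩
    have hle : algebraMap ℝ (H →L[ℂ] H) ε ≤ defect T := by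
      rw [ContinuousLinearMap.le_def]
      apply hpos
      intro x
      have h6 : (inner ℂ ((algebraMap ℝ (H →L[ℂ] H) ε) x) x : ℂ) = ((ε * ‖x‖ ^ 2 : ℝ) : ℂ) := by
        rw [Algebra.algebraMap_eq_smul_one]
        change (inner ℂ (ε • x) x : ℂ) = _
        rw [inner_smul_left_eq_smul, inner_self_eq_norm_sq_to_K]
        simp
      rw [_root_.sub_apply, inner_sub_left, h6, Complex.sub_im, Complex.sub_re, Complex.ofReal_im,
        Complex.ofReal_re, (key x).1]
      exact ⟨by simp, by linarith [(key x).2]⟩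
    exact CStarAlgebra.isUnit_of_le _ hle (isStrictlyPositive_algebraMap hε)

lemma ent_cont {n : ℕ} (α β : Fin n → ℕ) :
    Continuous fun X : Fin n → (H →L[ℂ] H) => ent X 1 α β := by
  have hl : ∀ p : Fin n → ℕ, Continuous fun X : Fin n → (H →L[ℂ] H) =>
      (List.ofFn fun i => X i ^ p i).prod := by
    intro p
    simp only [List.ofFn_eq_map]
    apply continuous_list_prod
    intro i _
    fun_prop
  have ha : Continuous fun X : Fin n → (H →L[ℂ] H) => fun i => adjoint (X i) :=
    continuous_pi fun i => (adjoint (𝕜 := ℂ) (E := H) (F := H)).continuous.comp (continuous_apply i)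
  unfold ent
  exact ((hl _).mul continuous_const).mul ((hl _).comp ha)

lemma QQ_cont {n : ℕ} (N : ℕ) (h : (Fin n → ℕ) → H) :
    Continuous fun X : Fin n → (H →L[ℂ] H) => QQ X N h := by
  unfold QQ gf
  refine Complex.continuous_re.comp ?_
  refine continuous_finsetSum _ fun α _ => continuous_finsetSum _ fun β _ => ?_
  exact ((ent_cont α β).clm_apply continuous_const).inner continuous_const

lemma inner_lim {E : Type*} [NormedAddCommGroup E] [InnerProductSpace ℂ E]
    {S : ℕ → E →L[ℂ] E} {L : E →L[ℂ] E} (hS : Filter.Tendsto S Filter.atTop (nhds L)) (x y : E) :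
    Filter.Tendsto (fun m => (inner ℂ (S m x) y : ℂ)) Filter.atTop (nhds (inner ℂ (L x) y)) := by
  have hc : Continuous fun S : E →L[ℂ] E => (inner ℂ (S x) y : ℂ) := by fun_prop
  exact (hc.tendsto L).comp hS

theorem complete_part {n : ℕ} (A : ℕ → Fin n → (H →L[ℂ] H)) (P : ℕ → ℝ → (L2 n H →L[ℂ] L2 n H))
    (hA : ∀ m, memPolydisk (A m))
    (hP : ∀ m, ∀ r ∈ Set.Ico (0 : ℝ) 1, IsPoissonKernel (A m) r (P m r))
    (hC : ∀ ε : ℝ, 0 < ε → ∃ N, ∀ m ≥ N, ∀ n ≥ N, deltaP (P m) (P n) < ε) :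
    ∃ (T : Fin n → (H →L[ℂ] H)) (PT : ℝ → (L2 n H →L[ℂ] L2 n H)),
      memPolydisk T ∧ (∀ r ∈ Set.Ico (0 : ℝ) 1, IsPoissonKernel T r (PT r)) ∧
      ∀ ε : ℝ, 0 < ε → ∃ N, ∀ m ≥ N, deltaP (P m) PT < ε := by
  have hcau : CauchySeq A := by
    rw [Metric.cauchySeq_iff]
    intro ε hε
    obtain ⟨δ, hδ, hd⟩ := delta_to_norm (H := H) ε hε
    obtain ⟨N, hN⟩ := hC δ hδ
    refine ⟨N, fun m hm l hl => ?_⟩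
    rw [dist_pi_lt_iff hε]
    intro i
    rw [dist_eq_norm]
    exact hd (hA m) (hA l) (hP m) (hP l) (hN m hm l hl) i
  obtain ⟨T, hT⟩ := cauchySeq_tendsto_of_complete hcau
  have hTi : ∀ i, Filter.Tendsto (fun m => A m i) Filter.atTop (nhds (T i)) :=
    fun i => (tendsto_pi_nhds.1 hT) i
  have hconv : ∀ ε : ℝ, 0 < ε → ∃ N, ∀ m ≥ N, ∀ i, ‖A m i - T i‖ ≤ ε := by
    intro ε hε
    obtain ⟨N, hN⟩ := Metric.tendsto_atTop.1 hT ε hε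
    refine ⟨N, fun m hm i => ?_⟩
    rw [← dist_eq_norm]
    exact (dist_le_pi_dist _ _ i).trans (hN m hm).le
  have hcomm : ∀ i j, Commute (T i) (T j) := by
    intro i j
    refine tendsto_nhds_unique ((hTi i).mul (hTi j)) ?_
    have : (fun m => A m i * A m j) = fun m => A m j * A m i := by
      funext m; exact ((hA m).1 i j).eq
    rw [this]
    exact (hTi j).mul (hTi i)
  have hmem : memPolydisk T := by
    obtain ⟨N₀, hN₀⟩ := hC 1 one_pos
    obtain ⟨e, he, hl⟩ := form_lower (hA N₀)
    refine mem_of_forms hcomm (ε := (Real.exp 1 ^ 2)⁻¹ * e) (by positivity) fun N h => ?_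
    refine ge_of_tendsto (((QQ_cont N h).tendsto T).comp hT) ?_
    filter_upwards [Filter.eventually_ge_atTop N₀] with m hm
    obtain ⟨c, h1, h2, h3⟩ := exists_of_deltaP_lt
      (sandwich_nonempty (hA m) (hA N₀) (hP m) (hP N₀)) (hN₀ m hm N₀ le_rfl)
    rw [sandwich_iff_s16 (hA m).1 (hA N₀).1 (hP m) (hP N₀)] at h3
    refine le_trans ?_ (h3 N h).1
    have hn := nsq_nonneg n N h
    have h4 := hl N h
    have h5 : 0 ≤ QQ (A N₀) N h := le_trans (by positivity) h4
    calc _ = (Real.exp 1 ^ 2)⁻¹ * (e * nsq n N h) := by ring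
      _ ≤ (Real.exp 1 ^ 2)⁻¹ * QQ (A N₀) N h := by gcongr
      _ ≤ _ := by gcongr
  obtain ⟨C, δ₀, hC0, hδ₀, hp⟩ := perturb hmem.2.1
  have hlim : ∀ r : ℝ, ∃ L : L2 n H →L[ℂ] L2 n H, r ∈ Set.Ico (0 : ℝ) 1 →
      Filter.Tendsto (fun m => P m r) Filter.atTop (nhds L) := by
    intro r
    by_cases hr : r ∈ Set.Ico (0 : ℝ) 1
    swap
    · exact ⟨0, fun h => absurd h hr⟩
    have hcs : CauchySeq fun m => P m r := by
      rw [Metric.cauchySeq_iff]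
      intro ε hε
      obtain ⟨N, hN⟩ := hconv (min δ₀ (ε / (4 * C))) (by positivity)
      refine ⟨N, fun m hm l hl => ?_⟩
      set δ := min δ₀ (ε / (4 * C)) with hδ
      have hδp : 0 < δ := by positivity
      have hδ1 : δ * (4 * C) ≤ ε := by
        rw [← le_div_iff₀ (by positivity)]; exact min_le_right _ _
      rw [dist_eq_norm]
      have hin : ∀ N h, inner ℂ ((P m r - P l r) (vec N h)) (vec N h) =
          gf (rk r (ent (A m) 1)) N h - gf (rk r (ent (A l) 1)) N h := by
        intro N h
        rw [_root_.sub_apply, inner_sub_left, inner_vec (hP m r hr), inner_vec (hP l r hr)]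
      have : ‖P m r - P l r‖ ≤ 2 * (C * δ) := by
        apply norm_of_vec _ _ (by positivity)
        · intro N h
          rw [hin, Complex.sub_im, rk_im _ (hA m).1, rk_im _ (hA l).1, sub_zero]
        · intro N h
          rw [hin, norm_vec]
          have h1 := hp δ hδp.le (min_le_left _ _) (A m) (hN m hm) r hr.1 hr.2.le N h
          have h2 := hp δ hδp.le (min_le_left _ _) (A l) (hN l hl) r hr.1 hr.2.le N h
          have h3 := norm_sub_le_norm_sub_add_norm_sub (gf (rk r (ent (A m) 1)) N h)
            (gf (rk r (ent T 1)) N h) (gf (rk r (ent (A l) 1)) N h)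
          rw [norm_sub_rev (gf (rk r (ent T 1)) N h)] at h3
          linarith
      have : 0 < C * δ := by positivity
      linarith
    obtain ⟨L, hL⟩ := cauchySeq_tendsto_of_complete hcs
    exact ⟨L, fun _ => hL⟩
  choose PT hPT using hlim
  have hker : ∀ r ∈ Set.Ico (0 : ℝ) 1, IsPoissonKernel T r (PT r) := by
    intro r hr α β h ℓ
    have h1 : Filter.Tendsto (fun m => (inner ℂ (P m r (lp.single 2 β h)) (lp.single 2 α ℓ) : ℂ))
        Filter.atTop (nhds (inner ℂ (PT r (lp.single 2 β h)) (lp.single 2 α ℓ))) :=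
      inner_lim (hPT r hr) _ _
    refine tendsto_nhds_unique h1 ?_
    have h2 : Filter.Tendsto (fun m => ((r ^ dd α β : ℝ) : ℂ) * inner ℂ (ent (A m) 1 α β h) ℓ)
        Filter.atTop (nhds (((r ^ dd α β : ℝ) : ℂ) * inner ℂ (ent T 1 α β h) ℓ)) :=
      (((((ent_cont α β).clm_apply continuous_const).inner continuous_const).tendsto T).comp
        hT).const_mul _
    simp only [ent, mul_one, dd] at h2
    refine h2.congr fun m => ?_
    exact (hP m r hr α β h ℓ).symm
  refine ⟨T, PT, hmem, hker, fun ε hε => ?_⟩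
  obtain ⟨δ, hδ, hd⟩ := norm_to_delta hmem hker ε hε
  obtain ⟨N, hN⟩ := hconv δ hδ
  exact ⟨N, fun m hm => hd (hA m) (hP m) (hN m hm)⟩

theorem topology_part {n : ℕ} (A : ℕ → Fin n → (H →L[ℂ] H)) (T : Fin n → (H →L[ℂ] H))
    (P : ℕ → ℝ → (L2 n H →L[ℂ] L2 n H)) (PT : ℝ → (L2 n H →L[ℂ] L2 n H))
    (hA : ∀ m, memPolydisk (A m)) (hT : memPolydisk T)
    (hP : ∀ m, ∀ r ∈ Set.Ico (0 : ℝ) 1, IsPoissonKernel (A m) r (P m r))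
    (hPT : ∀ r ∈ Set.Ico (0 : ℝ) 1, IsPoissonKernel T r (PT r)) :
    (∀ ε : ℝ, 0 < ε → ∃ N, ∀ m ≥ N, deltaP (P m) PT < ε) ↔
      (∀ ε : ℝ, 0 < ε → ∃ N, ∀ m ≥ N, ∀ i, ‖A m i - T i‖ < ε) := by
  constructor
  · intro h ε hε
    obtain ⟨δ, hδ, hd⟩ := delta_to_norm (H := H) ε hε
    obtain ⟨N, hN⟩ := h δ hδ
    exact ⟨N, fun m hm => hd (hA m) hT (hP m) hPT (hN m hm)⟩
  · intro h ε hε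
    obtain ⟨δ, hδ, hd⟩ := norm_to_delta hT hPT ε hε
    obtain ⟨N, hN⟩ := h δ hδ
    exact ⟨N, fun m hm => hd (hA m) (hP m) fun i => (hN m hm i).le⟩

/-- `δ_P` is complete on `D^k(H)`, and the `δ_P`-topology coincides with the
operator-norm topology on `D^k(H)`: (a) every `δ_P`-Cauchy sequence in `D^k(H)` converges in
`δ_P` to an element of `D^k(H)`; (b) for a sequence `(A^{(m)})` in `D^k(H)` and `A ∈ D^k(H)`,
`δ_P(A^{(m)}, A) → 0` iff `max_i ‖A_i^{(m)} - A_i‖ → 0`. -/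
theorem stmt_16 (hk : 1 ≤ k) :
    (∀ (A : ℕ → Fin k → (H →L[ℂ] H)) (P : ℕ → ℝ → (L2 k H →L[ℂ] L2 k H)),
      (∀ m, memPolydisk (A m)) →
      (∀ m, ∀ r ∈ Set.Ico (0 : ℝ) 1, IsPoissonKernel (A m) r (P m r)) →
      (∀ ε : ℝ, 0 < ε → ∃ N, ∀ m ≥ N, ∀ n ≥ N, deltaP (P m) (P n) < ε) →
      ∃ (T : Fin k → (H →L[ℂ] H)) (PT : ℝ → (L2 k H →L[ℂ] L2 k H)),
        memPolydisk T ∧ (∀ r ∈ Set.Ico (0 : ℝ) 1, IsPoissonKernel T r (PT r)) ∧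
        ∀ ε : ℝ, 0 < ε → ∃ N, ∀ m ≥ N, deltaP (P m) PT < ε) ∧
    (∀ (A : ℕ → Fin k → (H →L[ℂ] H)) (T : Fin k → (H →L[ℂ] H))
        (P : ℕ → ℝ → (L2 k H →L[ℂ] L2 k H)) (PT : ℝ → (L2 k H →L[ℂ] L2 k H)),
      (∀ m, memPolydisk (A m)) → memPolydisk T →
      (∀ m, ∀ r ∈ Set.Ico (0 : ℝ) 1, IsPoissonKernel (A m) r (P m r)) →
      (∀ r ∈ Set.Ico (0 : ℝ) 1, IsPoissonKernel T r (PT r)) →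
      ((∀ ε : ℝ, 0 < ε → ∃ N, ∀ m ≥ N, deltaP (P m) PT < ε) ↔
        (∀ ε : ℝ, 0 < ε → ∃ N, ∀ m ≥ N, ∀ i, ‖A m i - T i‖ < ε))) := by
  exact ⟨complete_part, topology_part⟩

end
end
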